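/- Fix φ, ψ, u ∈ C(X) with ψ = u satisfying property (P). Suppose every ergodic f-invariant measure μ with h_μ(f) > 0 has ∫ u dμ > 0, and suppose dim_u X < ∞. Then ∫ u dμ ≥ h_μ(f) / dim_u X for all μ ∈ M_f(X); consequently the conditional variational principle S(α) = sup{ h_μ(f)/∫ u dμ : μ ∈ M_f(X), ∫(φ − αψ) dμ = 0, ∫ u dμ > 0 } holds for all α ∈ int I. -/

import Mathlib

/-!
The proof rests on the two halves of the variational principle for the Bowen-cover pressure `P`.

* `entropy_add_integral_le`: if `P(φ) ≤ A`, then `h_μ(f, P) + ∫ φ dμ ≤ A` for every invariant `μ` and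
  every finite partition. A cheap cover by Bowen balls is finite by compactness, and concatenating
  its balls bounds the sums of `exp (S_n φ)` over points with distinct itineraries
  (`exp_birk_sum_le`); Gibbs' inequality turns this into a bound for entropies. Replacing the
  partition by disjoint compact subsets controls how many itineraries meet one ball.
* `exists_measure_of_lt_pressure`: if `a < P(φ)`, then some invariant `μ` and some finite partition
  satisfy `a ≤ h_μ(f, P) + ∫ φ dμ`. Here `μ` is a limit of orbit averages over maximal separated sets,
  weighted by `exp (S_n φ)`, and the partition has `μ`-null boundaries (`block_entropy_bound`).

Property (P) yields `S_n u ≥ -ε n - C` for each `ε > 0` (`birk_lower`). Hence `∫ u dμ ≥ 0` for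
invariant `μ`, and `P(-s' u) ≤ 0` whenever `s' > dim_u X`. With the first half of the variational
principle, `h_μ(f) ≤ s' ∫ u dμ`, which is the entropy bound.

For the conditional variational principle, the first half applied to `q(φ - α u) - t u` shows that
every admissible `h_μ(f) / ∫ u dμ` is at most `S(α)`. Conversely, let `s < S(α)`. The second half gives,
for each `q`, an invariant `μ` with `h_μ + q ∫ (φ - α u) dμ - s ∫ u dμ > 0`. Since `α` is interior,
`∫ (φ - α u)` takes both signs on invariant measures (`exists_sign`). Entropy is concave
(`EntGe.mix`), so an elementary argument on convex sets in the plane (`exists_zero_pos`) gives an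
invariant measure with `∫ (φ - α u) dμ = 0` and `h_μ > s ∫ u dμ`; the bound `h_μ ≤ K ∫ u dμ` then forces
`∫ u dμ > 0`.
-/

open MeasureTheory Filter Set Topology
open scoped ENNReal

noncomputable section

namespace Multifractal

variable {X : Type*} [MetricSpace X]

/-- The Birkhoff sum `S_n φ(x) = ∑_{k<n} φ(f^k x)`. -/
def birk (f : X → X) (φ : X → ℝ) (n : ℕ) (x : X) : ℝ :=
  ∑ k ∈ Finset.range n, φ (f^[k] x)

/-- The Bowen ball `B(x,n,δ)`. -/
def bowenBall (f : X → X) (x : X) (n : ℕ) (δ : ℝ) : Set X :=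
  {y | ∀ k < n, dist (f^[k] x) (f^[k] y) < δ}

/-- A countable cover of `Z` by Bowen balls of order at least `N` and radius `δ`,
with centres in `Z`; this is the collection `P(Z,N,δ)`. -/
def IsBowenCover (f : X → X) (Z : Set X) (N : ℕ) (δ : ℝ) (E : Set (X × ℕ)) : Prop :=
  E.Countable ∧ (∀ p ∈ E, p.1 ∈ Z ∧ N ≤ p.2) ∧ Z ⊆ ⋃ p ∈ E, bowenBall f p.1 p.2 δ

/-- The weighted sum `∑_i exp (w (x_i, n_i))` over a cover `E`. -/
def coverSum (E : Set (X × ℕ)) (w : X × ℕ → ℝ) : ℝ≥0∞ :=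
  ∑' p : E, ENNReal.ofReal (Real.exp (w ↑p))

/-- The set function `m_P(Z,s,φ,δ) = lim_{N→∞} m_P(Z,s,φ,N,δ)` (the limit in `N` is a
supremum, by monotonicity). -/
def mP (f : X → X) (Z : Set X) (s : ℝ) (φ : X → ℝ) (δ : ℝ) : ℝ≥0∞ :=
  ⨆ N : ℕ, ⨅ (E : Set (X × ℕ)) (_ : IsBowenCover f Z N δ E),
    coverSum E fun p => -(p.2 : ℝ) * s + birk f φ p.2 p.1

/-- `P_Z(φ,δ) = inf {s | m_P(Z,s,φ,δ) = 0}`, as an extended real. -/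
def pressureAt (f : X → X) (Z : Set X) (φ : X → ℝ) (δ : ℝ) : EReal :=
  sInf ((fun s : ℝ => (s : EReal)) '' {s : ℝ | mP f Z s φ δ = 0})

/-- The topological pressure `P_Z(φ) = lim_{δ→0} P_Z(φ,δ)` (the limit is a supremum, by
monotonicity in `δ`). -/
def pressure (f : X → X) (Z : Set X) (φ : X → ℝ) : EReal :=
  ⨆ (δ : ℝ) (_ : 0 < δ), pressureAt f Z φ δ

/-- Finite topological entropy: `h_top(X) = P_X(0) < ∞`. -/
def FiniteHtop (f : X → X) : Prop := pressure f univ (fun _ => 0) ≠ ⊤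

/-- The set function `m_u(Z,s,δ)` used to define the `u`-dimension. -/
def mU (f : X → X) (u : X → ℝ) (Z : Set X) (s : ℝ) (δ : ℝ) : ℝ≥0∞ :=
  ⨆ N : ℕ, ⨅ (E : Set (X × ℕ)) (_ : IsBowenCover f Z N δ E),
    coverSum E fun p => -s * birk f u p.2 p.1

/-- `dim_u(Z,δ) = inf {s | m_u(Z,s,δ) = 0}`. -/
def dimuAt (f : X → X) (u : X → ℝ) (Z : Set X) (δ : ℝ) : EReal :=
  sInf ((fun s : ℝ => (s : EReal)) '' {s : ℝ | mU f u Z s δ = 0})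

/-- The `u`-dimension `dim_u Z = lim_{δ→0} dim_u(Z,δ)`, with `dim_u ∅ = -∞`. -/
def dimu (f : X → X) (u : X → ℝ) (Z : Set X) : EReal :=
  ⨆ (δ : ℝ) (_ : 0 < δ), dimuAt f u Z δ

/-- Property (P): for every `δ>0` there exist covers `E_N ∈ P(X,N,δ)` with
`lim_{N→∞} inf_{(x,n) ∈ E_N} S_n u(x) = +∞`. -/
def PropP (f : X → X) (u : X → ℝ) : Prop :=
  ∀ δ : ℝ, 0 < δ → ∃ E : ℕ → Set (X × ℕ),
    (∀ N, IsBowenCover f univ N δ (E N)) ∧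
    ∀ C : ℝ, ∃ N₀ : ℕ, ∀ N ≥ N₀, ∀ p ∈ E N, C ≤ birk f u p.2 p.1

/-- The ratio level set `K_α = {x | S_nφ(x)/S_nψ(x) → α}`. -/
def Kratio (f : X → X) (φ ψ : X → ℝ) (α : ℝ) : Set X :=
  {x | Tendsto (fun n : ℕ => birk f φ n x / birk f ψ n x) atTop (𝓝 α)}

/-- The Birkhoff average level set `K_α^φ = {x | (1/n) S_nφ(x) → α}`. -/
def Kbirk (f : X → X) (φ : X → ℝ) (α : ℝ) : Set X :=
  {x | Tendsto (fun n : ℕ => birk f φ n x / n) atTop (𝓝 α)}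

/-- The set `X̂` of points with `liminf S_nψ(x) > 0` and `liminf (1/n) S_n u(x) > 0`. -/
def Xhat (f : X → X) (ψ u : X → ℝ) : Set X :=
  {x | 0 < Filter.liminf (fun n : ℕ => ((birk f ψ n x : ℝ) : EReal)) atTop ∧
       0 < Filter.liminf (fun n : ℕ => ((birk f u n x / n : ℝ) : EReal)) atTop}

/-- The set of points where `liminf (1/n) S_n v(x) > 0`. -/
def liminfPosSet (f : X → X) (v : X → ℝ) : Set X :=
  {x | 0 < Filter.liminf (fun n : ℕ => ((birk f v n x / n : ℝ) : EReal)) atTop}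

/-- The potential `q(φ - αψ) - tu`. -/
def potential (φ ψ u : X → ℝ) (α q t : ℝ) : X → ℝ :=
  fun x => q * (φ x - α * ψ x) - t * u x

/-- `T_α(q) = inf {t | P_Z(q(φ-αψ) - tu) ≤ 0}` for the system restricted to `Z`. -/
def TspecOn (f : X → X) (Z : Set X) (φ ψ u : X → ℝ) (α q : ℝ) : EReal :=
  sInf ((fun t : ℝ => (t : EReal)) '' {t : ℝ | pressure f Z (potential φ ψ u α q t) ≤ 0})

/-- The predicted spectrum `S(α) = inf_q T_α(q)` for the system restricted to `Z`. -/
def SspecOn (f : X → X) (Z : Set X) (φ ψ u : X → ℝ) (α : ℝ) : EReal :=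
  ⨅ q : ℝ, TspecOn f Z φ ψ u α q

/-- `T_α(q) = inf {t | P(q(φ-αψ) - tu) ≤ 0}`. -/
def Tspec (f : X → X) (φ ψ u : X → ℝ) (α q : ℝ) : EReal := TspecOn f univ φ ψ u α q

/-- The thermodynamically predicted spectrum `S(α) = inf_q T_α(q)`. -/
def Sspec (f : X → X) (φ ψ u : X → ℝ) (α : ℝ) : EReal := SspecOn f univ φ ψ u α

/-- `T_0(q) = inf{t | P(qφ - tu) ≤ 0}` (the non-mixed case `u = ψ`). -/
def T0fun (f : X → X) (φ u : X → ℝ) (q : ℝ) : EReal :=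
  sInf ((fun t : ℝ => (t : EReal)) ''
    {t : ℝ | pressure f univ (fun x => q * φ x - t * u x) ≤ 0})

/-- `Q = {q | T_0(q) < ∞}`. -/
def Qset (f : X → X) (φ u : X → ℝ) : Set ℝ := {q | T0fun f φ u q < ⊤}

/-- `Ĩ = ⋃_{q ∈ int Q} J(q)`: `α ∈ Ĩ` iff `α` is the slope of a subtangent line to the
convex function `T_0` at some `q` in the interior of `Q`. -/
def Itilde (f : X → X) (φ u : X → ℝ) : Set ℝ :=
  {α | ∃ q ∈ interior (Qset f φ u), ∀ q' : ℝ,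
    T0fun f φ u q + ((α * (q' - q) : ℝ) : EReal) ≤ T0fun f φ u q'}

/-- The approximate level set `G_n(U)`. -/
def Gset (f : X → X) (φ : X → ℝ) (n : ℕ) (U : Set ℝ) : Set X :=
  {x | birk f φ n x / n ∈ U}

/-- `Λ_n^δ(U)`: the minimal cardinality of a set `E` with `B(E,n,δ) ⊇ G_n(U)`. -/
def Lam (f : X → X) (φ : X → ℝ) (n : ℕ) (δ : ℝ) (U : Set ℝ) : ℕ :=
  sInf {m : ℕ | ∃ E : Finset X, E.card = m ∧ Gset f φ n U ⊆ ⋃ x ∈ E, bowenBall f x n δ}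

/-- `(1/n) log m` as an extended real, with value `-∞` when `m = 0`. -/
def elogn (m n : ℕ) : EReal :=
  if m = 0 then (⊥ : EReal) else ((Real.log m / n : ℝ) : EReal)

/-- The lower coarse spectrum. -/
def lFspec (f : X → X) (φ : X → ℝ) (α : ℝ) : EReal :=
  ⨅ (U : Set ℝ) (_ : U ∈ 𝓝 α), ⨆ (δ : ℝ) (_ : 0 < δ),
    Filter.liminf (fun n : ℕ => elogn (Lam f φ n δ U) n) atTop

/-- The upper coarse spectrum. -/
def uFspec (f : X → X) (φ : X → ℝ) (α : ℝ) : EReal :=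
  ⨅ (U : Set ℝ) (_ : U ∈ 𝓝 α), ⨆ (δ : ℝ) (_ : 0 < δ),
    Filter.limsup (fun n : ℕ => elogn (Lam f φ n δ U) n) atTop

/-- Right derivative of a convex function, as the infimum of difference quotients. -/
def Dplus (g : ℝ → ℝ) (q : ℝ) : ℝ :=
  sInf {m : ℝ | ∃ ε : ℝ, 0 < ε ∧ m = (g (q + ε) - g q) / ε}

/-- Left derivative of a convex function, as the supremum of difference quotients. -/
def Dminus (g : ℝ → ℝ) (q : ℝ) : ℝ :=
  sSup {m : ℝ | ∃ ε : ℝ, 0 < ε ∧ m = (g q - g (q - ε)) / ε}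

section Measures

variable [MeasurableSpace X]

/-- The set `M_f(X)` of `f`-invariant Borel probability measures. -/
def invProb (f : X → X) : Set (Measure X) :=
  {μ | IsProbabilityMeasure μ ∧ MeasurePreserving f μ μ}

/-- The set `M_f^e(X)` of ergodic `f`-invariant Borel probability measures. -/
def ergProb (f : X → X) : Set (Measure X) :=
  {μ | IsProbabilityMeasure μ ∧ Ergodic f μ}

/-- A finite measurable partition of `X`. -/
def IsFinPartition {m : ℕ} (P : Fin m → Set X) : Prop :=
  (∀ i, MeasurableSet (P i)) ∧ (∀ i j, i ≠ j → Disjoint (P i) (P j)) ∧ (⋃ i, P i) = univ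

/-- The entropy `H_μ(P) = ∑_i -μ(P_i) log μ(P_i)` of a finite partition. -/
def partEnt (μ : Measure X) {ι : Type*} [Fintype ι] (P : ι → Set X) : ℝ :=
  ∑ i, -((μ (P i)).toReal * Real.log (μ (P i)).toReal)

/-- The dynamical refinement `⋁_{k<n} f^{-k} P` of a partition. -/
def orbitJoin (f : X → X) {m : ℕ} (P : Fin m → Set X) (n : ℕ) :
    (Fin n → Fin m) → Set X :=
  fun w => ⋂ k : Fin n, f^[(k : ℕ)] ⁻¹' P (w k)

/-- The Kolmogorov–Sinai entropy `h_μ(f)`. -/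
def kolSinai (f : X → X) (μ : Measure X) : ℝ :=
  ⨆ (m : ℕ) (P : Fin m → Set X) (_ : IsFinPartition P),
    ⨅ n : ℕ, partEnt μ (orbitJoin f P (n + 1)) / (n + 1)

/-- The `u`-dimension of a measure: `dim_u μ = inf {dim_u Z | μ(Z) = 1}`. -/
def dimuMeas (f : X → X) (u : X → ℝ) (μ : Measure X) : EReal :=
  sInf {d : EReal | ∃ Z : Set X, μ Z = 1 ∧ d = dimu f u Z}

/-- `μ` is a weak Gibbs measure for `φ` with pressure `Pφ`. -/
def WeakGibbs (f : X → X) (μ : Measure X) (φ : X → ℝ) (Pφ : ℝ) : Prop :=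
  ∀ x : X,
    Tendsto (fun δ : ℝ => Filter.liminf (fun n : ℕ =>
        (((-Real.log ((μ (bowenBall f x n δ)).toReal) + birk f φ n x) / n : ℝ) : EReal)) atTop)
      (𝓝[>] (0 : ℝ)) (𝓝 ((Pφ : EReal))) ∧
    Tendsto (fun δ : ℝ => Filter.limsup (fun n : ℕ =>
        (((-Real.log ((μ (bowenBall f x n δ)).toReal) + birk f φ n x) / n : ℝ) : EReal)) atTop)
      (𝓝[>] (0 : ℝ)) (𝓝 ((Pφ : EReal)))

/-- The level set `K_α^{d_μ}` of points with pointwise dimension `α`. -/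
def KdimSet (μ : Measure X) (α : ℝ) : Set X :=
  {x | Tendsto (fun r : ℝ => Real.log ((μ (Metric.ball x r)).toReal) / Real.log r)
      (𝓝[>] (0 : ℝ)) (𝓝 α)}

end Measures

set_option linter.unusedSectionVars false

/-! ### Itineraries -/

/-- The itinerary of length `n` of `x` with respect to a finite coding `c` of the space. -/
def word {m : ℕ} (f : X → X) (c : X → Fin m) (n : ℕ) (x : X) : Fin n → Fin m :=
  fun k => c (f^[(k : ℕ)] x)

lemma birk_add (f : X → X) (φ : X → ℝ) (a b : ℕ) (x : X) :
    birk f φ (a + b) x = birk f φ a x + birk f φ b (f^[a] x) := by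
  unfold birk
  rw [Finset.sum_range_add]
  congr 1
  refine Finset.sum_congr rfl fun k _ => ?_
  rw [← Function.iterate_add_apply, add_comm k a]

lemma word_add_ext {m : ℕ} {f : X → X} {c : X → Fin m} {a b : ℕ} {x y : X}
    (h1 : word f c a x = word f c a y) (h2 : word f c b (f^[a] x) = word f c b (f^[a] y)) :
    word f c (a + b) x = word f c (a + b) y := by
  funext k
  rcases lt_or_ge (k : ℕ) a with hk | hk
  · exact congrFun h1 ⟨k, hk⟩
  · have := congrFun h2 ⟨k - a, by omega⟩
    simp only [word, ← Function.iterate_add_apply] at this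
    simpa only [word, Nat.sub_add_cancel hk] using this

/-- Submultiplicativity of sums over points with distinct itineraries: points are grouped according
to their first `a` symbols, and within a group `f^a` is injective with distinct `b`-itineraries. -/
lemma sum_group {m : ℕ} (f : X → X) (c : X → Fin m) (a b : ℕ) (E : Finset X)
    (hE : Set.InjOn (word f c (a + b)) (E : Set X)) (g h : X → ℝ) (γ : (Fin a → Fin m) → ℝ) (B : ℝ)
    (hγ : ∀ v, 0 ≤ γ v) (hg : ∀ x ∈ E, g x ≤ γ (word f c a x)) (hh : ∀ x, 0 ≤ h x)
    (hB : ∀ E' : Finset X, Set.InjOn (word f c b) (E' : Set X) → ∑ x ∈ E', h x ≤ B) :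
    ∑ x ∈ E, g x * h (f^[a] x) ≤ (∑ v, γ v) * B := by
  classical
  calc ∑ x ∈ E, g x * h (f^[a] x)
      ≤ ∑ x ∈ E, γ (word f c a x) * h (f^[a] x) :=
        Finset.sum_le_sum fun x hx => mul_le_mul_of_nonneg_right (hg x hx) (hh _)
    _ = ∑ v, ∑ x ∈ E with word f c a x = v, γ (word f c a x) * h (f^[a] x) :=
        (Finset.sum_fiberwise E (word f c a) _).symm
    _ ≤ ∑ v, γ v * B := by
        refine Finset.sum_le_sum fun v _ => ?_
        have hinj : Set.InjOn (f^[a]) ((E.filter fun x => word f c a x = v : Finset X) : Set X) := by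
          intro x hx y hy hxy
          simp only [Finset.coe_filter, Set.mem_ofPred_eq] at hx hy
          refine hE hx.1 hy.1 (word_add_ext (hx.2.trans hy.2.symm) ?_)
          rw [hxy]
        have : ∑ x ∈ E with word f c a x = v, γ (word f c a x) * h (f^[a] x)
            = γ v * ∑ y ∈ (E.filter fun x => word f c a x = v).image (f^[a]), h y := by
          rw [Finset.sum_image hinj, Finset.mul_sum]
          refine Finset.sum_congr rfl fun x hx => ?_
          rw [(Finset.mem_filter.1 hx).2]
        rw [this]
        refine mul_le_mul_of_nonneg_left (hB _ ?_) (hγ v)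
        intro x hx y hy hxy
        simp only [Finset.coe_image, Finset.coe_filter, Set.mem_image, Set.mem_ofPred_eq] at hx hy
        obtain ⟨x', hx', rfl⟩ := hx
        obtain ⟨y', hy', rfl⟩ := hy
        rw [hE hx'.1 hy'.1 (word_add_ext (hx'.2.trans hy'.2.symm) hxy)]
    _ = (∑ v, γ v) * B := by rw [Finset.sum_mul]

/-- Gibbs' inequality. -/
lemma gibbs {ι : Type*} (s : Finset ι) (p F : ι → ℝ) (Z : ℝ) (hZ : 0 < Z)
    (hp : ∀ i ∈ s, 0 ≤ p i) (hp1 : ∑ i ∈ s, p i = 1) (hF : ∑ i ∈ s, Real.exp (F i) ≤ Z) :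
    ∑ i ∈ s, (-(p i * Real.log (p i)) + p i * F i) ≤ Real.log Z := by
  have key : ∀ i ∈ s, -(p i * Real.log (p i)) + p i * F i - p i * Real.log Z
      ≤ Real.exp (F i) / Z - p i := by
    intro i hi
    rcases (hp i hi).eq_or_lt with h | h
    · rw [← h]; simp; positivity
    · have h1 : Real.log (Real.exp (F i) / (p i * Z)) = F i - (Real.log (p i) + Real.log Z) := by
        rw [Real.log_div (Real.exp_ne_zero _) (by positivity), Real.log_exp,
          Real.log_mul h.ne' hZ.ne']
      have h2 := Real.log_le_sub_one_of_pos (x := Real.exp (F i) / (p i * Z)) (by positivity)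
      rw [h1] at h2
      have h3 := mul_le_mul_of_nonneg_left h2 h.le
      have h4 : p i * (Real.exp (F i) / (p i * Z) - 1) = Real.exp (F i) / Z - p i := by
        field_simp
      rw [h4] at h3
      linarith
  have h := Finset.sum_le_sum key
  rw [Finset.sum_sub_distrib, Finset.sum_sub_distrib, ← Finset.sum_mul, ← Finset.sum_div, hp1]
    at h
  have : (∑ i ∈ s, Real.exp (F i)) / Z ≤ 1 := (div_le_one hZ).2 hF
  linarith

/-- If each member `p` of a finite cover by sets `B p` controls the weights `exp (S_{n_p} G)` of the
itineraries of length `n_p` of the points of `B p`, and the total control is at most `1` at rate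
`b`, then sums of `exp (S_M G)` over points with distinct itineraries grow at rate at most `b`:
orbit segments are cut into pieces that lie in members of the cover. -/
lemma exp_birk_sum_le {m : ℕ} (f : X → X) (c : X → Fin m) (G : X → ℝ) (K : ℝ) (hK : ∀ x, G x ≤ K)
    (b : ℝ) (Γ : Finset (X × ℕ)) (Bs : X × ℕ → Set X) (hn : ∀ p ∈ Γ, 1 ≤ p.2)
    (hcov : ∀ x, ∃ p ∈ Γ, x ∈ Bs p)
    (γ : (p : X × ℕ) → (Fin p.2 → Fin m) → ℝ) (hγ0 : ∀ p v, 0 ≤ γ p v)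
    (hγ : ∀ p ∈ Γ, ∀ y ∈ Bs p, Real.exp (birk f G p.2 y) ≤ γ p (word f c p.2 y))
    (hsum : ∑ p ∈ Γ, (∑ v, γ p v) * Real.exp (-(p.2 : ℝ) * b) ≤ 1) :
    ∃ C : ℝ, 0 < C ∧ ∀ (M : ℕ) (S : Finset X), Set.InjOn (word f c M) (S : Set X) →
      ∑ x ∈ S, Real.exp (birk f G M x) ≤ C * Real.exp (M * b) := by
  classical
  set T := Γ.sup (fun p => p.2) with hT
  have hTle : ∀ p ∈ Γ, p.2 ≤ T := fun p hp => Finset.le_sup (f := fun p : X × ℕ => p.2) hp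
  refine ⟨(m + 1 : ℝ) ^ T * Real.exp (T * (|K| + |b|)), by positivity, fun M => ?_⟩
  induction M using Nat.strong_induction_on with
  | _ M ih =>
  intro S hS
  rcases lt_or_ge M T with hM | hM
  · have hMT : (M : ℝ) ≤ T := by exact_mod_cast hM.le
    have hcard : (S.card : ℝ) ≤ (m + 1 : ℝ) ^ T := by
      have h1 : S.card ≤ (Finset.univ : Finset (Fin M → Fin m)).card :=
        Finset.card_le_card_of_injOn _ (fun _ _ => Finset.mem_coe.2 (Finset.mem_univ _)) hS
      simp only [Finset.card_univ, Fintype.card_fun, Fintype.card_fin] at h1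
      calc (S.card : ℝ) ≤ (m : ℝ) ^ M := by exact_mod_cast h1
        _ ≤ (m + 1 : ℝ) ^ M := by gcongr; linarith
        _ ≤ (m + 1 : ℝ) ^ T := pow_le_pow_right₀ (by linarith [Nat.cast_nonneg (α := ℝ) m]) hM.le
    have hbirk : ∀ x, birk f G M x ≤ M * |K| := by
      intro x
      calc birk f G M x ≤ ∑ k ∈ Finset.range M, |K| :=
            Finset.sum_le_sum fun k _ => (hK _).trans (le_abs_self K)
        _ = M * |K| := by simp
    calc ∑ x ∈ S, Real.exp (birk f G M x) ≤ ∑ x ∈ S, Real.exp (M * |K|) :=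
          Finset.sum_le_sum fun x _ => Real.exp_le_exp.2 (hbirk x)
      _ = S.card * Real.exp (M * |K|) := by simp
      _ ≤ (m + 1 : ℝ) ^ T * Real.exp (M * |K|) := by gcongr
      _ ≤ (m + 1 : ℝ) ^ T * (Real.exp (T * (|K| + |b|)) * Real.exp (M * b)) := by
          rw [← Real.exp_add]
          gcongr
          have h1 : (M : ℝ) * |K| ≤ T * |K| := by gcongr
          have h2 : (M : ℝ) * |b| ≤ T * |b| := by gcongr
          have h3 : (M : ℝ) * (-|b|) ≤ M * b := by gcongr; exact neg_abs_le b
          linarith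
      _ = _ := by ring
  · set C := (m + 1 : ℝ) ^ T * Real.exp (T * (|K| + |b|)) with hC
    have hC0 : 0 ≤ C := by positivity
    choose π hπΓ hπB using hcov
    have hfib : ∑ x ∈ S, Real.exp (birk f G M x)
        = ∑ p ∈ Γ, ∑ x ∈ S with π x = p, Real.exp (birk f G M x) :=
      (Finset.sum_fiberwise_of_maps_to (fun x _ => hπΓ x) _).symm
    rw [hfib]
    calc ∑ p ∈ Γ, ∑ x ∈ S with π x = p, Real.exp (birk f G M x)
        ≤ ∑ p ∈ Γ, (∑ v, γ p v) * Real.exp (-(p.2 : ℝ) * b) * (C * Real.exp (M * b)) := by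
          refine Finset.sum_le_sum fun p hp => ?_
          obtain ⟨d, hd⟩ := Nat.exists_eq_add_of_le ((hTle p hp).trans hM)
          have hdM : d < M := by have := hn p hp; omega
          have hinj : Set.InjOn (word f c (p.2 + d))
              ((S.filter fun x => π x = p : Finset X) : Set X) := by
            rw [← hd]; exact hS.mono fun x hx => (Finset.mem_filter.1 hx).1
          have := sum_group f c p.2 d _ hinj (fun x => Real.exp (birk f G p.2 x))
            (fun x => Real.exp (birk f G d x)) (γ p) _ (hγ0 p)
            (fun x hx => by
              have hx' := (Finset.mem_filter.1 hx).2
              exact hγ p hp x (hx' ▸ hπB x)) (fun x => (Real.exp_pos _).le) (ih d hdM)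
          refine le_trans (le_of_eq ?_) (this.trans (le_of_eq ?_))
          · refine Finset.sum_congr rfl fun x _ => ?_
            rw [hd, birk_add, Real.exp_add]
          · have : Real.exp ((d : ℝ) * b) = Real.exp (-(p.2 : ℝ) * b) * Real.exp (M * b) := by
              rw [← Real.exp_add, hd]; push_cast; ring_nf
            rw [this]; ring
      _ = (∑ p ∈ Γ, (∑ v, γ p v) * Real.exp (-(p.2 : ℝ) * b)) * (C * Real.exp (M * b)) := by
          rw [Finset.sum_mul]
      _ ≤ 1 * (C * Real.exp (M * b)) := by gcongr
      _ = _ := one_mul _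

/-! ### Entropy is at most pressure -/

lemma exists_code [MeasurableSpace X] {m : ℕ} {P : Fin m → Set X} (hP : IsFinPartition P) :
    ∃ c : X → Fin m, ∀ x i, x ∈ P i ↔ c x = i := by
  have h : ∀ x, ∃ i, x ∈ P i := fun x => by
    have : x ∈ ⋃ i, P i := hP.2.2 ▸ Set.mem_univ x
    simpa using this
  choose c hc using h
  refine ⟨c, fun x i => ⟨fun hx => ?_, fun hx => hx ▸ hc x⟩⟩
  by_contra hne
  exact Set.disjoint_left.1 (hP.2.1 _ _ hne) (hc x) hx

lemma mem_orbitJoin_iff {m : ℕ} {P : Fin m → Set X} {f : X → X} {c : X → Fin m}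
    (hc : ∀ x i, x ∈ P i ↔ c x = i) {n : ℕ} {w : Fin n → Fin m} {x : X} :
    x ∈ orbitJoin f P n w ↔ word f c n x = w := by
  simp only [orbitJoin, Set.mem_iInter, Set.mem_preimage, hc]
  exact ⟨fun h => funext h, fun h k => congrFun h k⟩

lemma measurableSet_orbitJoin [MeasurableSpace X] {m : ℕ} {P : Fin m → Set X}
    (hP : ∀ i, MeasurableSet (P i)) {f : X → X} (hf : Measurable f) (n : ℕ) (w : Fin n → Fin m) :
    MeasurableSet (orbitJoin f P n w) :=
  MeasurableSet.iInter fun k => (hf.iterate k) (hP _)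

lemma disjoint_orbitJoin {m : ℕ} {P : Fin m → Set X} {f : X → X} {c : X → Fin m}
    (hc : ∀ x i, x ∈ P i ↔ c x = i) (n : ℕ) :
    Pairwise (Function.onFun Disjoint (orbitJoin f P n)) := by
  intro v w hvw
  refine Set.disjoint_left.2 fun x hx hy => hvw ?_
  rw [← (mem_orbitJoin_iff hc).1 hx, ← (mem_orbitJoin_iff hc).1 hy]

lemma iUnion_orbitJoin {m : ℕ} {P : Fin m → Set X} {f : X → X} {c : X → Fin m}
    (hc : ∀ x i, x ∈ P i ↔ c x = i) (n : ℕ) : ⋃ w, orbitJoin f P n w = Set.univ :=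
  Set.eq_univ_of_forall fun x => Set.mem_iUnion.2 ⟨word f c n x, (mem_orbitJoin_iff hc).2 rfl⟩

lemma sum_measure_orbitJoin [MeasurableSpace X] (μ : Measure X) [IsProbabilityMeasure μ] {m : ℕ}
    {P : Fin m → Set X} (hP : ∀ i, MeasurableSet (P i)) {f : X → X} (hf : Measurable f)
    {c : X → Fin m} (hc : ∀ x i, x ∈ P i ↔ c x = i) (n : ℕ) :
    ∑ w, (μ (orbitJoin f P n w)).toReal = 1 := by
  have h := measure_iUnion (μ := μ) (disjoint_orbitJoin hc n)
    (measurableSet_orbitJoin hP hf n)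
  rw [iUnion_orbitJoin hc, measure_univ, tsum_fintype] at h
  rw [← ENNReal.toReal_sum (fun _ _ => measure_ne_top _ _), ← h, ENNReal.toReal_one]

/-- Gibbs' inequality for the partition into itineraries: one point is chosen in each atom where
`F` is at least its average. -/
lemma partEnt_add_integral_le [MeasurableSpace X] (μ : Measure X) [IsProbabilityMeasure μ]
    {m : ℕ} {P : Fin m → Set X} (hP : ∀ i, MeasurableSet (P i)) {f : X → X} (hf : Measurable f)
    {c : X → Fin m} (hc : ∀ x i, x ∈ P i ↔ c x = i) (n : ℕ) (F : X → ℝ) (hF : Integrable F μ)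
    (Z : ℝ) (hZ : 0 < Z) (hbound : ∀ S : Finset X, Set.InjOn (word f c n) (S : Set X) →
      ∑ x ∈ S, Real.exp (F x) ≤ Z) :
    partEnt μ (orbitJoin f P n) + ∫ x, F x ∂μ ≤ Real.log Z := by
  classical
  have : Nonempty X := nonempty_of_isProbabilityMeasure μ
  have hmeas := measurableSet_orbitJoin hP hf n
  have hy : ∀ w, ∃ y, μ (orbitJoin f P n w) ≠ 0 →
      y ∈ orbitJoin f P n w ∧ (⨍ x in orbitJoin f P n w, F x ∂μ) ≤ F y := by
    intro w
    by_cases h : μ (orbitJoin f P n w) = 0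
    · exact ⟨Classical.arbitrary X, fun h' => absurd h h'⟩
    · obtain ⟨y, hy, hy'⟩ := exists_setAverage_le h (measure_ne_top _ _) hF.integrableOn
      exact ⟨y, fun _ => ⟨hy, hy'⟩⟩
  choose y hy using hy
  set p : (Fin n → Fin m) → ℝ := fun w => (μ (orbitJoin f P n w)).toReal with hp
  set s : Finset (Fin n → Fin m) := Finset.univ.filter fun w => μ (orbitJoin f P n w) ≠ 0 with hs
  have hzero : ∀ w, w ∉ s → p w = 0 := by
    intro w hw
    have : μ (orbitJoin f P n w) = 0 := by simpa [hs] using hw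
    simp [hp, this]
  have hmem : ∀ w ∈ s, μ (orbitJoin f P n w) ≠ 0 := fun w hw => by simpa [hs] using hw
  have hp1 : ∑ w ∈ s, p w = 1 := by
    rw [← sum_measure_orbitJoin μ hP hf hc n]
    exact Finset.sum_subset (Finset.subset_univ _) fun w _ hw => hzero w hw
  have hword : ∀ w ∈ s, word f c n (y w) = w := fun w hw =>
    (mem_orbitJoin_iff hc).1 (hy w (hmem w hw)).1
  have hyinj : Set.InjOn y (s : Set (Fin n → Fin m)) := by
    intro v hv w hw h
    rw [← hword v hv, ← hword w hw, h]
  have hZ' : ∑ w ∈ s, Real.exp (F (y w)) ≤ Z := by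
    rw [← Finset.sum_image (f := fun x => Real.exp (F x)) hyinj]
    apply hbound
    intro a ha b hb hab
    simp only [Finset.coe_image, Set.mem_image] at ha hb
    obtain ⟨v, hv, rfl⟩ := ha
    obtain ⟨w, hw, rfl⟩ := hb
    rw [hword v hv, hword w hw] at hab
    rw [hab]
  have hG := gibbs s p (fun w => F (y w)) Z hZ (fun w _ => ENNReal.toReal_nonneg) hp1 hZ'
  have hE : partEnt μ (orbitJoin f P n) = ∑ w ∈ s, -(p w * Real.log (p w)) := by
    unfold partEnt
    exact (Finset.sum_subset (Finset.subset_univ _) fun w _ hw => by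
      simp only [show (μ (orbitJoin f P n w)).toReal = 0 from hzero w hw, zero_mul, neg_zero]).symm
  have hI : ∫ x, F x ∂μ ≤ ∑ w ∈ s, p w * F (y w) := by
    have h1 : ∫ x, F x ∂μ = ∑ w, ∫ x in orbitJoin f P n w, F x ∂μ := by
      rw [← integral_iUnion_fintype hmeas (disjoint_orbitJoin hc n) fun w => hF.integrableOn,
        iUnion_orbitJoin hc, Measure.restrict_univ]
    rw [h1, ← Finset.sum_subset (Finset.subset_univ s)]
    · refine Finset.sum_le_sum fun w hw => ?_
      have h2 := (hy w (hmem w hw)).2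
      rw [setAverage_eq, smul_eq_mul] at h2
      have hpos : 0 < p w := ENNReal.toReal_pos (hmem w hw) (measure_ne_top _ _)
      have h3 : μ.real (orbitJoin f P n w) = p w := rfl
      rw [h3, inv_mul_le_iff₀ hpos] at h2
      exact h2
    · intro w _ hw
      have : μ (orbitJoin f P n w) = 0 := by simpa [hs] using hw
      exact setIntegral_measure_zero _ this
  rw [Finset.sum_add_distrib] at hG
  rw [hE]
  linarith

lemma measurable_birk [MeasurableSpace X] {f : X → X} (hf : Measurable f) {G : X → ℝ}
    (hG : Measurable G) (n : ℕ) : Measurable (birk f G n) := by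
  unfold birk
  exact Finset.measurable_sum _ fun k _ => hG.comp (hf.iterate k)

lemma integral_birk [MeasurableSpace X] {μ : Measure X} {f : X → X} (hμ : MeasurePreserving f μ μ)
    {G : X → ℝ} (hG : Integrable G μ) (n : ℕ) :
    Integrable (birk f G n) μ ∧ ∫ x, birk f G n x ∂μ = n * ∫ x, G x ∂μ := by
  have h1 : ∀ k, Integrable (fun x => G (f^[k] x)) μ := fun k =>
    (hμ.iterate k).integrable_comp_of_integrable hG
  have h2 : ∀ k, ∫ x, G (f^[k] x) ∂μ = ∫ x, G x ∂μ := fun k => by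
    have hm := hμ.iterate k
    have := integral_map (μ := μ) hm.aemeasurable (f := G)
      (by rw [hm.map_eq]; exact hG.aestronglyMeasurable)
    rw [hm.map_eq] at this
    exact this.symm
  constructor
  · exact integrable_finsetSum _ fun k _ => h1 k
  · unfold birk
    rw [integral_finsetSum _ fun k _ => h1 k]
    simp [h2]

lemma isOpen_bowenBall {f : X → X} (hf : Continuous f) (x : X) (n : ℕ) (δ : ℝ) :
    IsOpen (bowenBall f x n δ) := by
  have : bowenBall f x n δ = ⋂ k ∈ Finset.range n, {y | dist (f^[k] x) (f^[k] y) < δ} := by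
    ext y; simp [bowenBall]
  rw [this]
  exact isOpen_biInter_finset fun k _ =>
    isOpen_lt (continuous_const.dist (hf.iterate k)) continuous_const

lemma mem_bowenBall_self (f : X → X) (x : X) (n : ℕ) {δ : ℝ} (hδ : 0 < δ) :
    x ∈ bowenBall f x n δ := fun k _ => by simpa using hδ

/-- Bowen balls are open, so by compactness a cheap cover can be taken finite. -/
lemma exists_finset_cover [CompactSpace X] {f : X → X} (hf : Continuous f) {δ : ℝ} {N : ℕ}
    {w : X × ℕ → ℝ} {η : ℝ}
    (h : (⨅ (E : Set (X × ℕ)) (_ : IsBowenCover f univ N δ E), coverSum E w) < ENNReal.ofReal η) :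
    ∃ Γ : Finset (X × ℕ), (∀ p ∈ Γ, N ≤ p.2) ∧ (∀ x, ∃ p ∈ Γ, x ∈ bowenBall f p.1 p.2 δ) ∧
      ∑ p ∈ Γ, Real.exp (w p) ≤ η := by
  classical
  simp only [iInf_lt_iff] at h
  obtain ⟨E, hE, hlt⟩ := h
  obtain ⟨b, hbE, hbfin, hb⟩ := isCompact_univ.elim_finite_subcover_image
    (b := E) (c := fun p : X × ℕ => bowenBall f p.1 p.2 δ)
    (fun p _ => isOpen_bowenBall hf _ _ _) hE.2.2
  refine ⟨hbfin.toFinset, fun p hp => (hE.2.1 p (hbE (hbfin.mem_toFinset.1 hp))).2, fun x => ?_, ?_⟩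
  · have := hb (Set.mem_univ x)
    simp only [Set.mem_iUnion] at this
    obtain ⟨p, hp, hx⟩ := this
    exact ⟨p, hbfin.mem_toFinset.2 hp, hx⟩
  · have h1 : ∑ p ∈ hbfin.toFinset, ENNReal.ofReal (Real.exp (w p)) ≤ coverSum E w := by
      unfold coverSum
      rw [tsum_subtype E (fun p => ENNReal.ofReal (Real.exp (w p)))]
      refine le_trans (le_of_eq ?_) (ENNReal.sum_le_tsum hbfin.toFinset)
      refine Finset.sum_congr rfl fun p hp => ?_
      rw [Set.indicator_of_mem (hbE (hbfin.mem_toFinset.1 hp))]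
    rw [← ENNReal.ofReal_sum_of_nonneg fun _ _ => (Real.exp_pos _).le] at h1
    have h2 := h1.trans_lt hlt
    have hη : 0 < η := by
      by_contra hη
      rw [ENNReal.ofReal_of_nonpos (not_lt.1 hη)] at h2
      exact not_lt_zero h2
    exact ((ENNReal.ofReal_lt_ofReal_iff hη).1 h2).le

lemma iInf_cover_eq_zero_of_mP {f : X → X} {s δ : ℝ} {φ : X → ℝ} (h : mP f univ s φ δ = 0) (N : ℕ) :
    (⨅ (E : Set (X × ℕ)) (_ : IsBowenCover f univ N δ E),
      coverSum E fun p => -(p.2 : ℝ) * s + birk f φ p.2 p.1) = 0 := by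
  unfold mP at h
  rw [ENNReal.iSup_eq_zero] at h
  exact h N

lemma exists_mP_eq_zero {f : X → X} {φ : X → ℝ} {A B δ : ℝ} (hδ : 0 < δ)
    (h : pressure f univ φ ≤ (A : EReal)) (hAB : A < B) :
    ∃ a < B, mP f univ a φ δ = 0 := by
  have h1 : pressureAt f univ φ δ < (B : EReal) :=
    lt_of_le_of_lt ((le_iSup₂ (f := fun (δ : ℝ) (_ : 0 < δ) => pressureAt f univ φ δ) δ hδ).trans h)
      (EReal.coe_lt_coe_iff.2 hAB)
  obtain ⟨_, ⟨a, ha, rfl⟩, hlt⟩ := sInf_lt_iff.1 h1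
  exact ⟨a, EReal.coe_lt_coe_iff.1 hlt, ha⟩

/-- A uniform positive lower bound for the distances between finitely many disjoint compact
sets. -/
lemma exists_sep {m : ℕ} (K : Fin m → Set X) (hK : ∀ i, IsCompact (K i))
    (hd : ∀ i j, i ≠ j → Disjoint (K i) (K j)) :
    ∃ δ > 0, ∀ i j, ∀ x ∈ K i, ∀ y ∈ K j, dist x y < δ → i = j := by
  have h : ∀ q : Fin m × Fin m, ∃ δ > 0, q.1 ≠ q.2 → ∀ x ∈ K q.1, ∀ y ∈ K q.2, δ ≤ dist x y := by
    intro q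
    by_cases hq : q.1 = q.2
    · exact ⟨1, one_pos, fun h => absurd hq h⟩
    · obtain ⟨r, hr, h⟩ := Metric.exists_pos_forall_lt_edist (hK q.1) (hK q.2).isClosed
        (hd _ _ hq)
      refine ⟨r, NNReal.coe_pos.2 hr, fun _ x hx y hy => ?_⟩
      have := h x hx y hy
      rw [edist_nndist, ENNReal.coe_lt_coe] at this
      exact_mod_cast this.le
  choose d hd0 hd' using h
  rcases isEmpty_or_nonempty (Fin m × Fin m) with he | he
  · exact ⟨1, one_pos, fun i j => (he.false (i, j)).elim⟩
  · obtain ⟨q, hq⟩ := Finite.exists_min d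
    refine ⟨d q, hd0 q, fun i j x hx y hy hxy => ?_⟩
    by_contra hij
    exact absurd (hd' (i, j) hij x hx y hy) (not_le.2 (hxy.trans_le (hq _)))

lemma exists_modulus [CompactSpace X] {φ : X → ℝ} (hφ : Continuous φ) {ε : ℝ} (hε : 0 < ε) :
    ∃ δ > 0, ∀ x y, dist x y < δ → |φ x - φ y| ≤ ε := by
  obtain ⟨δ, hδ, h⟩ := Metric.uniformContinuous_iff.1
    (CompactSpace.uniformContinuous_of_continuous hφ) ε hε
  exact ⟨δ, hδ, fun x y hxy => by have := h hxy; rw [Real.dist_eq] at this; exact this.le⟩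

lemma birk_ball {f : X → X} {φ : X → ℝ} {ε δ : ℝ} (h : ∀ x y, dist x y < δ → |φ x - φ y| ≤ ε)
    {x y : X} {n : ℕ} (hy : y ∈ bowenBall f x n δ) :
    |birk f φ n x - birk f φ n y| ≤ n * ε := by
  unfold birk
  rw [← Finset.sum_sub_distrib]
  refine (Finset.abs_sum_le_sum_abs _ _).trans ?_
  calc ∑ k ∈ Finset.range n, |φ (f^[k] x) - φ (f^[k] y)| ≤ ∑ k ∈ Finset.range n, ε :=
        Finset.sum_le_sum fun k hk => h _ _ (hy k (Finset.mem_range.1 hk))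
    _ = n * ε := by simp

lemma exists_bound [CompactSpace X] {φ : X → ℝ} (hφ : Continuous φ) :
    ∃ C, 0 ≤ C ∧ ∀ x, |φ x| ≤ C := by
  obtain ⟨C, hC⟩ := isCompact_univ.exists_bound_of_continuousOn hφ.continuousOn
  exact ⟨max C 0, le_max_right _ _, fun x => (hC x (Set.mem_univ x)).trans (le_max_left _ _)⟩

/-- Compact subsets `K i ⊆ P i` with total defect at most `ε`. -/
lemma exists_compact_approx [CompactSpace X] [MeasurableSpace X] [BorelSpace X] (μ : Measure X)
    [IsProbabilityMeasure μ] {m : ℕ} {P : Fin m → Set X} (hP : IsFinPartition P) {ε : ℝ}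
    (hε : 0 < ε) :
    ∃ K : Fin m → Set X, (∀ i, IsCompact (K i)) ∧ (∀ i, K i ⊆ P i) ∧
      (μ (⋃ i, K i)ᶜ).toReal ≤ ε := by
  have h : ∀ i, ∃ K ⊆ P i, IsCompact K ∧ μ (P i \ K) < ENNReal.ofReal (ε / (m + 1)) := by
    intro i
    exact (hP.1 i).exists_isCompact_sdiff_lt (measure_ne_top _ _)
      (ENNReal.ofReal_pos.2 (by positivity)).ne'
  choose K hKP hK hKμ using h
  refine ⟨K, hK, hKP, ENNReal.toReal_le_of_le_ofReal hε.le ?_⟩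
  have hsub : (⋃ i, K i)ᶜ ⊆ ⋃ i, P i \ K i := by
    intro x hx
    have : x ∈ ⋃ i, P i := hP.2.2 ▸ Set.mem_univ x
    obtain ⟨i, hi⟩ := Set.mem_iUnion.1 this
    exact Set.mem_iUnion.2 ⟨i, hi, fun h => hx (Set.mem_iUnion.2 ⟨i, h⟩)⟩
  calc μ (⋃ i, K i)ᶜ ≤ ∑ i, μ (P i \ K i) :=
        (measure_mono hsub).trans (measure_iUnion_fintype_le _ _)
    _ ≤ ∑ i : Fin m, ENNReal.ofReal (ε / (m + 1)) := Finset.sum_le_sum fun i _ => (hKμ i).le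
    _ = ENNReal.ofReal (m * (ε / (m + 1))) := by
        rw [Finset.sum_const, Finset.card_univ, Fintype.card_fin, nsmul_eq_mul,
          ENNReal.ofReal_mul (by positivity), ENNReal.ofReal_natCast]
    _ ≤ ENNReal.ofReal ε := by
        apply ENNReal.ofReal_le_ofReal
        rw [← mul_div_assoc, div_le_iff₀ (by positivity)]
        nlinarith

/-- `h_μ(f, P) + ∫ φ dμ ≤ P(φ)` for every finite partition `P`. The atoms are shrunk to compact
sets; visits to the small remaining set are penalised by a constant `L` in the potential, which makes
the total weight of the itineraries that meet a Bowen ball of order `n` at most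
`(1 + m * exp (-L)) ^ n` times the weight of its centre. -/
lemma entropy_add_integral_le [CompactSpace X] [MeasurableSpace X] [BorelSpace X]
    {f : X → X} (hf : Continuous f) {φ : X → ℝ} (hφ : Continuous φ) {A : ℝ}
    (hA : pressure f univ φ ≤ (A : EReal)) {μ : Measure X} (hμ : μ ∈ invProb f) {m : ℕ}
    {P : Fin m → Set X} (hP : IsFinPartition P) :
    (⨅ n : ℕ, partEnt μ (orbitJoin f P (n + 1)) / (n + 1)) + ∫ x, φ x ∂μ ≤ A := by
  classical
  obtain ⟨hprob, hinv⟩ := hμ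
  obtain ⟨c, hc⟩ := exists_code hP
  refine le_of_forall_pos_le_add fun ε₀ hε₀ => ?_
  obtain ⟨ε, hε, hε4⟩ : ∃ ε > 0, 4 * ε ≤ ε₀ := ⟨ε₀ / 4, by positivity, by linarith⟩
  obtain ⟨L, hL0, hL⟩ : ∃ L : ℝ, 0 < L ∧ m * Real.exp (-L) ≤ ε := by
    have ht : Tendsto (fun L : ℝ => m * Real.exp (-L)) atTop (𝓝 ((m : ℝ) * 0)) :=
      (Real.tendsto_exp_neg_atTop_nhds_zero).const_mul _
    rw [mul_zero] at ht
    obtain ⟨L, h1, h2⟩ := ((ht.eventually (ge_mem_nhds hε)).and (eventually_gt_atTop 0)).exists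
    exact ⟨L, h2, h1⟩
  obtain ⟨K, hKc, hKP, hKμ⟩ := exists_compact_approx μ hP (ε := ε / L) (by positivity)
  set bad : Set X := (⋃ i, K i)ᶜ with hbad
  have hbadm : MeasurableSet bad := (MeasurableSet.iUnion fun i => (hKc i).measurableSet).compl
  set G : X → ℝ := fun x => φ x - L * bad.indicator (fun _ => (1 : ℝ)) x with hG
  have hind : ∀ x, 0 ≤ bad.indicator (fun _ => (1 : ℝ)) x := fun x =>
    Set.indicator_nonneg (fun _ _ => zero_le_one) x
  obtain ⟨C₀, hC₀, hC₀φ⟩ := exists_bound hφ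
  have hφint : Integrable φ μ := hφ.integrable_of_hasCompactSupport
    (HasCompactSupport.of_compactSpace φ)
  have hiint : Integrable (bad.indicator (fun _ => (1 : ℝ))) μ :=
    (integrable_const 1).indicator hbadm
  have hGint : Integrable G μ := hφint.sub (hiint.const_mul L)
  have hGI : ∫ x, φ x ∂μ - ε ≤ ∫ x, G x ∂μ := by
    rw [hG, integral_sub hφint (hiint.const_mul L), integral_const_mul,
      integral_indicator_const _ hbadm, smul_eq_mul, mul_one]
    have : L * μ.real bad ≤ L * (ε / L) := mul_le_mul_of_nonneg_left hKμ hL0.le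
    rw [mul_div_cancel₀ _ hL0.ne'] at this
    linarith
  obtain ⟨δ₁, hδ₁, hmod⟩ := exists_modulus hφ hε
  obtain ⟨δ₂, hδ₂, hsep⟩ := exists_sep K hKc fun i j hij =>
    (hP.2.1 i j hij).mono (hKP i) (hKP j)
  set δ := min δ₁ (δ₂ / 2) with hδ
  have hδ0 : 0 < δ := lt_min hδ₁ (by positivity)
  obtain ⟨a, haA, ha⟩ := exists_mP_eq_zero hδ0 hA (show A < A + ε by linarith)
  obtain ⟨Γ, hΓn, hΓcov, hΓsum⟩ := exists_finset_cover hf (N := 1) (η := 1)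
    (w := fun p => -(p.2 : ℝ) * a + birk f φ p.2 p.1)
    (by rw [iInf_cover_eq_zero_of_mP ha 1]; simp)
  -- the symbol seen at time `k` by the points of the ball `p` that lie in `⋃ K i` at that time
  have hsym : ∀ (p : X × ℕ) (k : ℕ), ∃ s : Option (Fin m), ∀ y ∈ bowenBall f p.1 p.2 δ, k < p.2 →
      f^[k] y ∉ bad → s = some (c (f^[k] y)) := by
    intro p k
    by_cases hex : ∃ y ∈ bowenBall f p.1 p.2 δ, k < p.2 ∧ f^[k] y ∉ bad
    · obtain ⟨y, hy, hk, hyb⟩ := hex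
      refine ⟨some (c (f^[k] y)), fun z hz _ hzb => ?_⟩
      simp only [hbad, Set.mem_compl_iff, not_not, Set.mem_iUnion] at hyb hzb
      obtain ⟨i, hi⟩ := hyb
      obtain ⟨j, hj⟩ := hzb
      have hd : dist (f^[k] y) (f^[k] z) < δ₂ := by
        have h1 := hy k hk
        have h2 := hz k hk
        have h3 : δ ≤ δ₂ / 2 := min_le_right _ _
        have h4 := dist_triangle_left (f^[k] y) (f^[k] z) (f^[k] p.1)
        linarith
      have hij := hsep i j _ hi _ hj hd
      rw [(hc _ _).1 (hKP i hi), (hc _ _).1 (hKP j hj), hij]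
    · exact ⟨none, fun y hy hk hyb => absurd ⟨y, hy, hk, hyb⟩ hex⟩
  choose sym hsym using hsym
  set θ : X × ℕ → ℕ → Fin m → ℝ := fun p k i => if sym p k = some i then 1 else Real.exp (-L)
    with hθ
  have hθ0 : ∀ p k i, 0 ≤ θ p k i := by
    intro p k i; simp only [hθ]; split_ifs <;> positivity
  have hθsum : ∀ p k, ∑ i, θ p k i ≤ Real.exp ε := by
    intro p k
    have h1 : ∀ i, θ p k i ≤ (if sym p k = some i then 1 else 0) + Real.exp (-L) := by
      intro i; simp only [hθ]; split_ifs
      · linarith [Real.exp_pos (-L)]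
      · simp
    have h2 : ∑ i, (if sym p k = some i then (1 : ℝ) else 0) ≤ 1 := by
      rcases sym p k with _ | j
      · simp
      · simp
    calc ∑ i, θ p k i ≤ ∑ i : Fin m, ((if sym p k = some i then 1 else 0) + Real.exp (-L)) :=
          Finset.sum_le_sum fun i _ => h1 i
      _ ≤ 1 + m * Real.exp (-L) := by rw [Finset.sum_add_distrib]; simpa using h2
      _ ≤ 1 + ε := by linarith
      _ ≤ Real.exp ε := by linarith [Real.add_one_le_exp ε]
  obtain ⟨C, hC, hbound⟩ := exp_birk_sum_le f c G C₀
    (fun x => by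
      have h1 := (le_abs_self _).trans (hC₀φ x)
      have h2 := mul_nonneg hL0.le (hind x)
      simp only [hG]; linarith)
    (a + 2 * ε) Γ (fun p => bowenBall f p.1 p.2 δ) hΓn hΓcov
    (fun p v => Real.exp (birk f φ p.2 p.1 + p.2 * ε) * ∏ k : Fin p.2, θ p k (v k))
    (fun p v => mul_nonneg (Real.exp_pos _).le (Finset.prod_nonneg fun k _ => hθ0 _ _ _))
    (fun p hp y hy => by
      have h1 : birk f G p.2 y = birk f φ p.2 y +
          ∑ k ∈ Finset.range p.2, -(L * bad.indicator (fun _ => (1 : ℝ)) (f^[k] y)) := by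
        unfold birk
        rw [← Finset.sum_add_distrib]
        rfl
      rw [h1, Real.exp_add, Real.exp_sum, Finset.prod_range]
      have h2 := abs_le.1 (birk_ball (f := f) (fun x y hxy => hmod x y (hxy.trans_le (min_le_left _ _))) hy)
      gcongr with k _
      · linarith [h2.1]
      · simp only [hθ, word]
        by_cases hk : f^[(k : ℕ)] y ∈ bad
        · rw [Set.indicator_of_mem hk]
          split_ifs
          · simpa using hL0.le
          · simp
        · rw [hsym p k y hy k.2 hk, Set.indicator_of_notMem hk]
          simp)
    (by
      refine le_trans (Finset.sum_le_sum fun p _ => ?_) hΓsum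
      rw [← Finset.mul_sum]
      have h1 : ∑ v : Fin p.2 → Fin m, ∏ k : Fin p.2, θ p k (v k) = ∏ k : Fin p.2, ∑ i, θ p k i :=
        (Fintype.prod_sum fun (k : Fin p.2) i => θ p k i).symm
      rw [h1]
      have h2 : ∏ k : Fin p.2, ∑ i, θ p k i ≤ Real.exp (p.2 * ε) := by
        calc ∏ k : Fin p.2, ∑ i, θ p k i ≤ ∏ k : Fin p.2, Real.exp ε :=
              Finset.prod_le_prod (fun k _ => Finset.sum_nonneg fun i _ => hθ0 _ _ _)
                fun k _ => hθsum p k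
          _ = _ := by rw [Finset.prod_const, Finset.card_univ, Fintype.card_fin, ← Real.exp_nat_mul]
      calc _ ≤ Real.exp (birk f φ p.2 p.1 + p.2 * ε) * Real.exp (p.2 * ε)
              * Real.exp (-(p.2 : ℝ) * (a + 2 * ε)) := by gcongr
        _ = _ := by rw [← Real.exp_add, ← Real.exp_add]; ring_nf)
  have hmain : ∀ n : ℕ, (⨅ n : ℕ, partEnt μ (orbitJoin f P (n + 1)) / (n + 1)) + ∫ x, G x ∂μ
      ≤ Real.log C / (n + 1) + (a + 2 * ε) := by
    intro n
    have h1 := integral_birk hinv hGint (n + 1)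
    have h2 := partEnt_add_integral_le μ hP.1 hf.measurable hc (n + 1) _ h1.1
      (C * Real.exp ((n + 1 : ℕ) * (a + 2 * ε))) (by positivity) (hbound (n + 1))
    rw [h1.2, Real.log_mul hC.ne' (Real.exp_ne_zero _), Real.log_exp] at h2
    push_cast at h2
    have hbdd : BddBelow (Set.range fun n : ℕ => partEnt μ (orbitJoin f P (n + 1)) / (n + 1)) := by
      refine ⟨0, ?_⟩
      rintro _ ⟨n, rfl⟩
      refine div_nonneg (Finset.sum_nonneg fun w _ => ?_) (by positivity)
      have := Real.negMulLog_nonneg (x := (μ (orbitJoin f P (n + 1) w)).toReal)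
        ENNReal.toReal_nonneg (ENNReal.toReal_mono ENNReal.one_ne_top prob_le_one)
      rw [Real.negMulLog] at this
      linarith
    have h3 := ciInf_le hbdd n
    have hn : (0 : ℝ) < n + 1 := by positivity
    have h4 : partEnt μ (orbitJoin f P (n + 1)) / (n + 1) + ∫ x, G x ∂μ
        ≤ Real.log C / (n + 1) + (a + 2 * ε) := by
      rw [← sub_nonneg]
      have : Real.log C / (n + 1) + (a + 2 * ε) - (partEnt μ (orbitJoin f P (n + 1)) / (n + 1)
          + ∫ x, G x ∂μ) = (Real.log C + (n + 1) * (a + 2 * ε) -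
          (partEnt μ (orbitJoin f P (n + 1)) + (n + 1) * ∫ x, G x ∂μ)) / (n + 1) := by
        field_simp
      rw [this]
      exact div_nonneg (by linarith) hn.le
    linarith
  have hlim : Tendsto (fun n : ℕ => Real.log C / ((n : ℝ) + 1) + (a + 2 * ε)) atTop
      (𝓝 (0 + (a + 2 * ε))) := by
    refine Tendsto.add_const _ ?_
    exact tendsto_const_nhds.div_atTop
      (tendsto_atTop_add_const_right _ _ tendsto_natCast_atTop_atTop)
  have := ge_of_tendsto' hlim hmain
  linarith

/-! ### Pressure is approximated by measures: entropy of orbit ensembles -/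

lemma card_le_pow {m : ℕ} {f : X → X} {c : X → Fin m} {n : ℕ} {E : Finset X}
    (hE : Set.InjOn (word f c n) (E : Set X)) : (E.card : ℝ) ≤ (m : ℝ) ^ n := by
  have h1 : E.card ≤ (Finset.univ : Finset (Fin n → Fin m)).card :=
    Finset.card_le_card_of_injOn _ (fun _ _ => Finset.mem_coe.2 (Finset.mem_univ _)) hE
  simp only [Finset.card_univ, Fintype.card_fun, Fintype.card_fin] at h1
  exact_mod_cast h1

/-- A probability weight `ν` on words of length `q` gives, through consecutive blocks, a weight on
long words whose total mass only counts the symbols that are not in a block. -/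
lemma sum_prod_blocks_le {m : ℕ} (f : X → X) (c : X → Fin m) (q : ℕ) (ν : (Fin q → Fin m) → ℝ)
    (hν : ∀ v, 0 ≤ ν v) (hν1 : ∑ v, ν v ≤ 1) (R j d : ℕ) (E : Finset X)
    (hE : Set.InjOn (word f c (j + (R * q + d))) (E : Set X)) :
    ∑ x ∈ E, ∏ r ∈ Finset.range R, ν (word f c q (f^[j + r * q] x)) ≤ (m : ℝ) ^ (j + d) := by
  have h0 : ∀ (R : ℕ) (E : Finset X), Set.InjOn (word f c (R * q + d)) (E : Set X) →
      ∑ x ∈ E, ∏ r ∈ Finset.range R, ν (word f c q (f^[r * q] x)) ≤ (m : ℝ) ^ d := by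
    intro R
    induction R with
    | zero =>
      intro E hE
      have hE' : Set.InjOn (word f c d) (E : Set X) := by
        have h : 0 * q + d = d := by ring
        rwa [h] at hE
      simpa using card_le_pow hE'
    | succ R ih =>
      intro E hE
      have hE' : Set.InjOn (word f c (q + (R * q + d))) (E : Set X) := by
        have : (R + 1) * q + d = q + (R * q + d) := by ring
        rwa [this] at hE
      have := sum_group f c q (R * q + d) E hE' (fun x => ν (word f c q x))
        (fun x => ∏ r ∈ Finset.range R, ν (word f c q (f^[r * q] x))) ν _ hν (fun x _ => le_rfl)
        (fun x => Finset.prod_nonneg fun _ _ => hν _) ih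
      refine le_trans (le_of_eq ?_) (this.trans ?_)
      · refine Finset.sum_congr rfl fun x _ => ?_
        rw [Finset.prod_range_succ', Nat.zero_mul, Function.iterate_zero_apply]
        refine (mul_comm _ _).trans (congrArg₂ _ rfl ?_)
        · refine Finset.prod_congr rfl fun r _ => ?_
          rw [← Function.iterate_add_apply]
          congr 3
          ring
      · exact mul_le_of_le_one_left (by positivity) hν1
  have := sum_group f c j (R * q + d) E hE (fun x => 1)
    (fun x => ∏ r ∈ Finset.range R, ν (word f c q (f^[r * q] x))) (fun _ => 1) _
    (fun _ => zero_le_one) (fun x _ => le_rfl)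
    (fun x => Finset.prod_nonneg fun _ _ => hν _) (h0 R)
  refine le_trans (le_of_eq ?_) (this.trans (le_of_eq ?_))
  · refine Finset.sum_congr rfl fun x _ => ?_
    rw [one_mul]
    refine Finset.prod_congr rfl fun r _ => ?_
    rw [← Function.iterate_add_apply, add_comm j]
  · simp [pow_add]

lemma sum_range_blocks (g : ℕ → ℝ) (q R : ℕ) :
    ∑ j ∈ Finset.range q, ∑ r ∈ Finset.range R, g (j + r * q) = ∑ k ∈ Finset.range (R * q), g k := by
  rw [Finset.sum_comm]
  induction R with
  | zero => simp
  | succ R ih =>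
    rw [Finset.sum_range_succ, ih, add_mul, one_mul, Finset.sum_range_add]
    congr 1
    exact Finset.sum_congr rfl fun j _ => by rw [add_comm]

/-- Comparison of the partition function of an ensemble of orbits with the `q`-block statistics of
these orbits: Gibbs' inequality is applied to the block weights with each of the `q` possible
offsets, and the results are added. -/
lemma block_entropy_bound {m : ℕ} (hm : 1 ≤ m) (f : X → X) (c : X → Fin m) (φ : X → ℝ) (n q : ℕ)
    (hq : 1 ≤ q) (hqn : q ≤ n) (E : Finset X) (hEne : E.Nonempty)
    (hE : Set.InjOn (word f c n) (E : Set X)) (p : X → ℝ) (Z : ℝ)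
    (hZ : Z = ∑ x ∈ E, Real.exp (birk f φ n x)) (hp : ∀ x, p x = Real.exp (birk f φ n x) / Z)
    (ν : (Fin q → Fin m) → ℝ) (hν0 : ∀ v, 0 ≤ ν v) (hν1 : ∑ v, ν v = 1)
    (hνpos : ∀ x ∈ E, ∀ k < n, 0 < ν (word f c q (f^[k] x))) :
    q * (Real.log Z - ∑ x ∈ E, p x * birk f φ n x)
      ≤ ∑ x ∈ E, ∑ k ∈ Finset.range n, p x * -Real.log (ν (word f c q (f^[k] x)))
        + q * (2 * q * Real.log m) := by
  have hZ0 : 0 < Z := hZ ▸ Finset.sum_pos (fun x _ => Real.exp_pos _) hEne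
  have hp0 : ∀ x, 0 ≤ p x := fun x => by rw [hp]; positivity
  have hp1 : ∑ x ∈ E, p x = 1 := by
    simp_rw [hp]; rw [← Finset.sum_div, ← hZ, div_self hZ0.ne']
  have hν_le : ∀ v, ν v ≤ 1 := fun v =>
    hν1 ▸ Finset.single_le_sum (fun w _ => hν0 w) (Finset.mem_univ v)
  have hlog : ∀ x, Real.log (p x) = birk f φ n x - Real.log Z := fun x => by
    rw [hp, Real.log_div (Real.exp_ne_zero _) hZ0.ne', Real.log_exp]
  set R := n / q - 1 with hR
  have hdiv : 1 ≤ n / q := (Nat.one_le_div_iff (by omega)).2 hqn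
  have hRq1 : R * q + q ≤ n := by
    have : (R + 1) * q ≤ n := by
      rw [hR, Nat.sub_add_cancel hdiv]; exact Nat.div_mul_le_self n q
    linarith
  have hRq2 : n ≤ R * q + 2 * q := by
    have h1 := Nat.lt_div_mul_add (a := n) (b := q) (by omega)
    have h2 : n / q = R + 1 := by omega
    rw [h2] at h1
    nlinarith
  have hj : ∀ j ∈ Finset.range q, Real.log Z - ∑ x ∈ E, p x * birk f φ n x
      ≤ ∑ x ∈ E, ∑ r ∈ Finset.range R, p x * -Real.log (ν (word f c q (f^[j + r * q] x)))
        + 2 * q * Real.log m := by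
    intro j hj
    have hjq := Finset.mem_range.1 hj
    obtain ⟨d, hd⟩ := Nat.exists_eq_add_of_le (show j + R * q ≤ n by omega)
    rw [add_assoc] at hd
    have hS := sum_prod_blocks_le f c q ν hν0 hν1.le R j d E (by rwa [← hd])
    have hexp : ∑ x ∈ E, Real.exp (∑ r ∈ Finset.range R,
        Real.log (ν (word f c q (f^[j + r * q] x)))) ≤ (m : ℝ) ^ (j + d) := by
      refine le_trans (le_of_eq (Finset.sum_congr rfl fun x hx => ?_)) hS
      rw [Real.exp_sum]
      refine Finset.prod_congr rfl fun r hr => Real.exp_log (hνpos x hx _ ?_)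
      have : r + 1 ≤ R := Finset.mem_range.1 hr
      nlinarith
    have hm0 : (0 : ℝ) < m := by exact_mod_cast hm
    have hG := gibbs E p _ _ (by positivity) (fun x _ => hp0 x) hp1 hexp
    rw [Real.log_pow] at hG
    have hlm : 0 ≤ Real.log m := Real.log_nonneg (by exact_mod_cast hm)
    have h2 : ((j + d : ℕ) : ℝ) * Real.log m ≤ 2 * q * Real.log m := by
      gcongr
      have : j + d ≤ 2 * q := by omega
      exact_mod_cast this
    have h3 : ∑ x ∈ E, (-(p x * Real.log (p x)) + p x * ∑ r ∈ Finset.range R,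
        Real.log (ν (word f c q (f^[j + r * q] x))))
        = Real.log Z - ∑ x ∈ E, p x * birk f φ n x
          - ∑ x ∈ E, ∑ r ∈ Finset.range R, p x * -Real.log (ν (word f c q (f^[j + r * q] x))) := by
      have h4 : Real.log Z = ∑ x ∈ E, p x * Real.log Z := by rw [← Finset.sum_mul, hp1, one_mul]
      rw [h4, ← Finset.sum_sub_distrib, ← Finset.sum_sub_distrib]
      refine Finset.sum_congr rfl fun x _ => ?_
      rw [hlog, ← Finset.mul_sum, Finset.sum_neg_distrib]
      ring
    rw [h3] at hG
    linarith
  have hsum := Finset.sum_le_sum hj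
  rw [Finset.sum_const, Finset.card_range, nsmul_eq_mul, Finset.sum_add_distrib, Finset.sum_const,
    Finset.card_range, nsmul_eq_mul, Finset.sum_comm] at hsum
  refine hsum.trans (add_le_add_left (Finset.sum_le_sum fun x hx => ?_) _)
  rw [sum_range_blocks (fun k => p x * -Real.log (ν (word f c q (f^[k] x)))) q R]
  refine Finset.sum_le_sum_of_subset_of_nonneg ?_ fun k hk _ => ?_
  · exact Finset.range_subset_range.2 (by omega)
  · refine mul_nonneg (hp0 x) (neg_nonneg.2 (Real.log_nonpos (hν0 _) (hν_le _)))

/-- A finite `(n, δ)`-separated set that is maximal, hence also spanning. -/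
lemma exists_separated [CompactSpace X] {f : X → X} (hf : Continuous f) (n : ℕ) {δ : ℝ}
    (hδ : 0 < δ) :
    ∃ E : Finset X, (∀ x ∈ E, ∀ y ∈ E, y ∈ bowenBall f x n δ → x = y) ∧
      ∀ x, ∃ e ∈ E, x ∈ bowenBall f e n δ := by
  classical
  obtain ⟨t, -, ht⟩ := isCompact_univ.elim_nhds_subcover (fun x : X => bowenBall f x n (δ / 2))
    (fun x _ => (isOpen_bowenBall hf x n _).mem_nhds (mem_bowenBall_self f x n (half_pos hδ)))
  have hcov : ∀ x, ∃ e ∈ t, x ∈ bowenBall f e n (δ / 2) := by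
    intro x
    have := ht (Set.mem_univ x)
    simpa using this
  choose π hπt hπ using hcov
  let sep : Finset X → Prop := fun E => ∀ x ∈ E, ∀ y ∈ E, y ∈ bowenBall f x n δ → x = y
  have hcard : ∀ E : Finset X, sep E → E.card ≤ t.card := by
    intro E hE
    refine Finset.card_le_card_of_injOn π (fun x _ => hπt x) fun x hx y hy hxy => ?_
    refine hE x hx y hy fun k hk => ?_
    have h1 := hπ x k hk
    have h2 := hπ y k hk
    rw [← hxy] at h2
    have h3 := dist_triangle_left (f^[k] x) (f^[k] y) (f^[k] (π x))
    linarith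
  obtain ⟨N, hN, hmax⟩ : ∃ N, (∃ E, sep E ∧ E.card = N) ∧ ∀ E, sep E → E.card ≤ N := by
    have hex : ∃ N, ∀ E, sep E → E.card ≤ N := ⟨_, hcard⟩
    refine ⟨Nat.find hex, ?_, Nat.find_spec hex⟩
    by_contra hne
    have hlt : ∀ E, sep E → E.card < Nat.find hex := fun E hE =>
      lt_of_le_of_ne (Nat.find_spec hex E hE) fun h => hne ⟨E, hE, h⟩
    have h0 : 0 < Nat.find hex := (Nat.zero_le _).trans_lt (hlt ∅ (by simp [sep]))
    refine Nat.find_min hex (m := Nat.find hex - 1) (by omega) fun E hE => ?_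
    have := hlt E hE
    omega
  obtain ⟨E, hE, hEN⟩ := hN
  refine ⟨E, hE, fun x => ?_⟩
  by_contra hx
  push Not at hx
  have hxE : x ∉ E := fun h => hx x h (mem_bowenBall_self f x n hδ)
  have hsep : sep (insert x E) := by
    intro y hy z hz hyz
    rcases Finset.mem_insert.1 hy with rfl | hy' <;> rcases Finset.mem_insert.1 hz with rfl | hz'
    · rfl
    · exact absurd (fun k hk => by rw [dist_comm]; exact hyz k hk) (hx z hz')
    · exact absurd hyz (hx y hy')
    · exact hE y hy' z hz' hyz
  have := hmax _ hsep
  rw [Finset.card_insert_of_notMem hxE] at this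
  omega

/-- A finite partition into sets of small diameter whose boundaries are `μ`-null. -/
lemma exists_null_frontier_partition [CompactSpace X] [MeasurableSpace X] [BorelSpace X]
    (μ : Measure X) [IsProbabilityMeasure μ] {δ : ℝ} (hδ : 0 < δ) :
    ∃ (m : ℕ) (P : Fin m → Set X), IsFinPartition P ∧ (∀ i, μ (frontier (P i)) = 0) ∧
      ∀ i, ∀ x ∈ P i, ∀ y ∈ P i, dist x y < δ := by
  classical
  have hr : ∀ x : X, ∃ r ∈ Set.Ioo 0 (δ / 2), μ (frontier (Metric.ball x r)) = 0 := by
    intro x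
    obtain ⟨r, hr, h⟩ := exists_null_frontier_thickening μ {x} (half_pos hδ)
    rw [Metric.thickening_singleton] at h
    exact ⟨r, hr, h⟩
  choose r hr hμr using hr
  obtain ⟨t, -, ht⟩ := isCompact_univ.elim_nhds_subcover (fun x : X => Metric.ball x (r x))
    (fun x _ => Metric.ball_mem_nhds x (hr x).1)
  let e := t.equivFin
  let B : Fin t.card → Set X := fun i => Metric.ball (e.symm i : X) (r (e.symm i : X))
  have hB : ⋃ i, B i = Set.univ := by
    refine Set.eq_univ_of_forall fun x => ?_
    have := ht (Set.mem_univ x)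
    simp only [Set.mem_iUnion] at this ⊢
    obtain ⟨y, hy, hx⟩ := this
    exact ⟨e ⟨y, hy⟩, by simpa [B] using hx⟩
  have hdis : ∀ i, disjointed B i ⊆ B i := disjointed_subset B
  refine ⟨t.card, disjointed B, ⟨fun i => ?_, fun i j hij => disjoint_disjointed B hij, ?_⟩,
    fun i => ?_, fun i x hx y hy => ?_⟩
  · refine disjointedRec (p := fun s => MeasurableSet s) (fun t j ht => ?_) ?_
    · exact ht.diff Metric.isOpen_ball.measurableSet
    · exact Metric.isOpen_ball.measurableSet
  · rw [iUnion_disjointed, hB]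
  · refine disjointedRec (p := fun s => μ (frontier s) = 0) (fun t j ht => ?_) (hμr _)
    rw [Set.sdiff_eq]
    refine measure_mono_null (frontier_inter_subset _ _) (measure_union_null ?_ ?_)
    · exact measure_mono_null Set.inter_subset_left ht
    · rw [frontier_compl]
      exact measure_mono_null Set.inter_subset_right (hμr _)
  · have h1 := hdis i hx
    have h2 := hdis i hy
    simp only [B, Metric.mem_ball] at h1 h2
    have := dist_triangle_right x y (e.symm i : X)
    have := (hr (e.symm i : X)).2
    linarith

/-- If the pressure exceeds `a`, the partition functions of suitable separated sets grow at least
like `exp (n a)`. -/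
lemma exists_large_separated [CompactSpace X] {f : X → X} (hf : Continuous f) {φ : X → ℝ} {a : ℝ}
    (ha : (a : EReal) < pressure f univ φ) :
    ∃ δ > 0, ∃ η > 0, ∃ N : ℕ, ∀ n ≥ N, ∃ E : Finset X,
      (∀ x ∈ E, ∀ y ∈ E, y ∈ bowenBall f x n δ → x = y) ∧
      η * Real.exp (n * a) ≤ ∑ x ∈ E, Real.exp (birk f φ n x) := by
  classical
  unfold pressure at ha
  simp only [lt_iSup_iff] at ha
  obtain ⟨δ, hδ, hlt⟩ := ha
  have hne : mP f univ a φ δ ≠ 0 := fun h =>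
    absurd (sInf_le (Set.mem_image_of_mem (fun s : ℝ => (s : EReal)) h)) (not_le.2 hlt)
  have hpos := pos_iff_ne_zero.2 hne
  unfold mP at hpos
  rw [lt_iSup_iff] at hpos
  obtain ⟨N, hN⟩ := hpos
  obtain ⟨η', hη'0, hη'⟩ := exists_between hN
  have hη'top : η' ≠ ⊤ := hη'.ne_top
  refine ⟨δ, hδ, η'.toReal, ENNReal.toReal_pos hη'0.ne' hη'top, N, fun n hn => ?_⟩
  obtain ⟨E, hE, hspan⟩ := exists_separated hf n hδ
  refine ⟨E, hE, ?_⟩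
  have hcov : IsBowenCover f univ N δ
      ((E.image fun x => (x, n) : Finset (X × ℕ)) : Set (X × ℕ)) := by
    refine ⟨Finset.countable_toSet _, fun p hp => ?_, fun x _ => ?_⟩
    · obtain ⟨x, -, rfl⟩ := Finset.mem_image.1 (Finset.mem_coe.1 hp)
      exact ⟨Set.mem_univ _, hn⟩
    · obtain ⟨e, he, hx⟩ := hspan x
      exact Set.mem_biUnion (Finset.mem_coe.2 (Finset.mem_image_of_mem _ he)) hx
  have h1 := hη'.le.trans (iInf₂_le _ hcov)
  rw [coverSum, Finset.tsum_subtype' (E.image fun x => (x, n))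
    (fun p => ENNReal.ofReal (Real.exp (-(p.2 : ℝ) * a + birk f φ p.2 p.1))),
    Finset.sum_image (fun x _ y _ h => (Prod.mk.inj h).1),
    ← ENNReal.ofReal_sum_of_nonneg (fun _ _ => (Real.exp_pos _).le)] at h1
  have h2 := ENNReal.toReal_le_of_le_ofReal (Finset.sum_nonneg fun _ _ => (Real.exp_pos _).le) h1
  simp_rw [Real.exp_add] at h2
  rw [← Finset.mul_sum, neg_mul, Real.exp_neg] at h2
  have := Real.exp_pos (n * a)
  calc η'.toReal * Real.exp (n * a)
      ≤ ((Real.exp (n * a))⁻¹ * ∑ x ∈ E, Real.exp (birk f φ n x)) * Real.exp (n * a) := by gcongr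
    _ = _ := by field_simp

/-- The average of the orbit segments of length `n` starting in `E`, with weights `p`. -/
def emp [MeasurableSpace X] (f : X → X) (E : Finset X) (p : X → ℝ) (n : ℕ) : Measure X :=
  ∑ x ∈ E, ∑ k ∈ Finset.range n, ENNReal.ofReal (p x / n) • Measure.dirac (f^[k] x)

section emp

variable [MeasurableSpace X] {f : X → X} {E : Finset X} {p : X → ℝ} {n : ℕ}

lemma emp_apply (hp : ∀ x, 0 ≤ p x) {s : Set X} (hs : MeasurableSet s) :
    (emp f E p n s).toReal
      = ∑ x ∈ E, ∑ k ∈ Finset.range n, p x / n * s.indicator (fun _ => (1 : ℝ)) (f^[k] x) := by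
  have h0 : ∀ x, 0 ≤ p x / n := fun x => div_nonneg (hp x) (Nat.cast_nonneg n)
  have h1 : emp f E p n s = ∑ x ∈ E, ∑ k ∈ Finset.range n,
      ENNReal.ofReal (p x / n * s.indicator (fun _ => (1 : ℝ)) (f^[k] x)) := by
    unfold emp
    rw [Measure.finsetSum_apply]
    refine Finset.sum_congr rfl fun x _ => ?_
    rw [Measure.finsetSum_apply]
    refine Finset.sum_congr rfl fun k _ => ?_
    rw [Measure.smul_apply, Measure.dirac_apply' _ hs, smul_eq_mul, ENNReal.ofReal_mul (h0 x)]
    by_cases h : f^[k] x ∈ s <;> simp [h]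
  have h2 : ∀ x k, 0 ≤ p x / n * s.indicator (fun _ => (1 : ℝ)) (f^[k] x) := fun x k =>
    mul_nonneg (h0 x) (Set.indicator_nonneg (fun _ _ => zero_le_one) _)
  rw [h1, ENNReal.toReal_sum (fun x _ => ENNReal.sum_ne_top.2 fun _ _ => ENNReal.ofReal_ne_top)]
  refine Finset.sum_congr rfl fun x _ => ?_
  rw [ENNReal.toReal_sum (fun x _ => ENNReal.ofReal_ne_top)]
  exact Finset.sum_congr rfl fun k _ => ENNReal.toReal_ofReal (h2 x k)

lemma isProbabilityMeasure_emp (hp : ∀ x, 0 ≤ p x) (hp1 : ∑ x ∈ E, p x = 1) (hn : n ≠ 0) :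
    IsProbabilityMeasure (emp f E p n) := by
  have h := emp_apply (f := f) (E := E) (n := n) hp MeasurableSet.univ
  simp only [Set.indicator_univ, mul_one, Finset.sum_const, Finset.card_range, nsmul_eq_mul] at h
  have hn' : (n : ℝ) ≠ 0 := Nat.cast_ne_zero.2 hn
  simp_rw [mul_div_cancel₀ _ hn'] at h
  rw [hp1] at h
  exact ⟨by rw [← ENNReal.toReal_eq_one_iff]; exact h⟩

lemma integral_emp [BorelSpace X] (hp : ∀ x, 0 ≤ p x) (g : X → ℝ) :
    ∫ x, g x ∂(emp f E p n) = ∑ x ∈ E, p x / n * birk f g n x := by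
  have hint : ∀ x k, Integrable g (ENNReal.ofReal (p x / n) • Measure.dirac (f^[k] x)) :=
    fun x k => (integrable_dirac (by simp)).smul_measure ENNReal.ofReal_ne_top
  unfold emp
  rw [integral_finsetSum_measure (fun x _ => integrable_finsetSum_measure.2 fun k _ => hint x k)]
  refine Finset.sum_congr rfl fun x _ => ?_
  rw [integral_finsetSum_measure (fun k _ => hint x k), birk, Finset.mul_sum]
  refine Finset.sum_congr rfl fun k _ => ?_
  rw [integral_smul_measure, integral_dirac,
    ENNReal.toReal_ofReal (div_nonneg (hp x) (Nat.cast_nonneg n)), smul_eq_mul]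

/-- The average of orbit segments of length `n` is invariant up to an error of order `1 / n`. -/
lemma abs_integral_emp_sub_le [BorelSpace X] (hp : ∀ x, 0 ≤ p x) (hp1 : ∑ x ∈ E, p x = 1)
    {g : X → ℝ} {C : ℝ} (hC : ∀ x, |g x| ≤ C) :
    |∫ x, g (f x) ∂(emp f E p n) - ∫ x, g x ∂(emp f E p n)| ≤ 2 * C / n := by
  rw [integral_emp hp, integral_emp hp, ← Finset.sum_sub_distrib]
  refine (Finset.abs_sum_le_sum_abs _ _).trans ?_
  have h : ∀ x, birk f (fun x => g (f x)) n x - birk f g n x = g (f^[n] x) - g x := by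
    intro x
    unfold birk
    rw [← Finset.sum_sub_distrib]
    simp_rw [← Function.iterate_succ_apply' f]
    rw [Finset.sum_range_sub (fun k => g (f^[k] x))]
    simp
  calc ∑ x ∈ E, |p x / n * birk f (fun x => g (f x)) n x - p x / n * birk f g n x|
      ≤ ∑ x ∈ E, p x * (2 * C / n) := by
        refine Finset.sum_le_sum fun x _ => ?_
        rw [← mul_sub, h, abs_mul, abs_of_nonneg (div_nonneg (hp x) (Nat.cast_nonneg n)),
          div_mul_eq_mul_div, mul_div_assoc]
        refine mul_le_mul_of_nonneg_left (div_le_div_of_nonneg_right ?_ (Nat.cast_nonneg n)) (hp x)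
        have := abs_sub (g (f^[n] x)) (g x)
        linarith [hC (f^[n] x), hC x]
    _ = 2 * C / n := by rw [← Finset.sum_mul, hp1, one_mul]

/-- The entropy of the `q`-block partition for the orbit average `emp f E p n`. -/
lemma partEnt_emp {m : ℕ} {P : Fin m → Set X} (hP : ∀ i, MeasurableSet (P i)) (hf : Measurable f)
    {c : X → Fin m} (hc : ∀ x i, x ∈ P i ↔ c x = i) (hp : ∀ x, 0 ≤ p x) (q : ℕ) :
    partEnt (emp f E p n) (orbitJoin f P q)
      = ∑ x ∈ E, ∑ k ∈ Finset.range n,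
          p x / n * -Real.log (emp f E p n (orbitJoin f P q (word f c q (f^[k] x)))).toReal := by
  classical
  unfold partEnt
  have h : ∀ v, (emp f E p n (orbitJoin f P q v)).toReal
      = ∑ x ∈ E, ∑ k ∈ Finset.range n, if word f c q (f^[k] x) = v then p x / n else 0 := by
    intro v
    rw [emp_apply hp (measurableSet_orbitJoin hP hf q v)]
    refine Finset.sum_congr rfl fun x _ => Finset.sum_congr rfl fun k _ => ?_
    by_cases hv : word f c q (f^[k] x) = v
    · rw [Set.indicator_of_mem ((mem_orbitJoin_iff hc).2 hv), if_pos hv, mul_one]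
    · rw [Set.indicator_of_notMem (fun h => hv ((mem_orbitJoin_iff hc).1 h)), if_neg hv, mul_zero]
  have h2 : ∀ v, -((emp f E p n (orbitJoin f P q v)).toReal
        * Real.log (emp f E p n (orbitJoin f P q v)).toReal)
      = ∑ x ∈ E, ∑ k ∈ Finset.range n, if word f c q (f^[k] x) = v then
          p x / n * -Real.log (emp f E p n (orbitJoin f P q (word f c q (f^[k] x)))).toReal
          else 0 := by
    intro v
    rw [← mul_neg]
    nth_rewrite 1 [h v]
    rw [Finset.sum_mul]
    refine Finset.sum_congr rfl fun x _ => ?_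
    rw [Finset.sum_mul]
    refine Finset.sum_congr rfl fun k _ => ?_
    split_ifs with hv
    · rw [hv]
    · rw [zero_mul]
  rw [Finset.sum_congr rfl fun v _ => h2 v, Finset.sum_comm]
  refine Finset.sum_congr rfl fun x _ => ?_
  rw [Finset.sum_comm]
  refine Finset.sum_congr rfl fun k _ => ?_
  rw [Finset.sum_ite_eq, if_pos (Finset.mem_univ _)]

end emp

lemma frontier_orbitJoin_null [MeasurableSpace X] {μ : Measure X} {f : X → X} (hf : Continuous f)
    (hμ : MeasurePreserving f μ μ) {m : ℕ} {P : Fin m → Set X}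
    (h : ∀ i, μ (frontier (P i)) = 0) (n : ℕ) (w : Fin n → Fin m) [OpensMeasurableSpace X] :
    μ (frontier (orbitJoin f P n w)) = 0 := by
  have hsub : frontier (orbitJoin f P n w) ⊆ ⋃ k : Fin n, f^[(k : ℕ)] ⁻¹' frontier (P (w k)) := by
    intro x hx
    by_contra hne
    simp only [Set.mem_iUnion, Set.mem_preimage, not_exists] at hne
    have hk : ∀ k : Fin n, x ∉ frontier (f^[(k : ℕ)] ⁻¹' P (w k)) := fun k hk =>
      hne k ((hf.iterate k).frontier_preimage_subset _ hk)
    have hcl : ∀ k : Fin n, x ∈ closure (f^[(k : ℕ)] ⁻¹' P (w k)) := fun k =>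
      closure_mono (Set.iInter_subset _ k) hx.1
    have hint : ∀ k : Fin n, x ∈ interior (f^[(k : ℕ)] ⁻¹' P (w k)) := fun k => by
      by_contra h'
      exact hk k ⟨hcl k, h'⟩
    refine hx.2 ?_
    unfold orbitJoin
    rw [interior_iInter_of_finite]
    exact Set.mem_iInter.2 hint
  refine measure_mono_null hsub (measure_iUnion_null fun k => ?_)
  rw [(hμ.iterate k).measure_preimage isClosed_frontier.measurableSet.nullMeasurableSet, h]

/-- The half of the variational principle that produces measures: every number below the pressure
is, up to the integral of the potential, below the entropy of a finite partition with respect to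
some invariant measure. The measure is a limit of orbit averages over separated sets, weighted by
`exp (S_n φ)`. -/
lemma exists_measure_of_lt_pressure [CompactSpace X] [MeasurableSpace X] [BorelSpace X]
    {f : X → X} (hf : Continuous f) {φ : X → ℝ} (hφ : Continuous φ) {a : ℝ}
    (ha : (a : EReal) < pressure f univ φ) :
    ∃ μ ∈ invProb f, ∃ (m : ℕ) (P : Fin m → Set X), IsFinPartition P ∧
      a - ∫ x, φ x ∂μ ≤ ⨅ n : ℕ, partEnt μ (orbitJoin f P (n + 1)) / (n + 1) := by
  classical
  obtain ⟨δ, hδ, η, hη, N, hE⟩ := exists_large_separated hf ha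
  choose! E hsep hlarge using hE
  let L : ℕ → ℕ := fun i => i + (N + 1)
  have hLN : ∀ i, N ≤ L i := fun i => by simp only [L]; omega
  have hL0 : ∀ i, L i ≠ 0 := fun i => by simp only [L]; omega
  let Z : ℕ → ℝ := fun i => ∑ x ∈ E (L i), Real.exp (birk f φ (L i) x)
  have hZlow : ∀ i, η * Real.exp (L i * a) ≤ Z i := fun i => hlarge _ (hLN i)
  have hZ0 : ∀ i, 0 < Z i := fun i => lt_of_lt_of_le (by positivity) (hZlow i)
  let p : ℕ → X → ℝ := fun i x => Real.exp (birk f φ (L i) x) / Z i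
  have hp : ∀ i x, 0 ≤ p i x := fun i x => div_nonneg (Real.exp_pos _).le (hZ0 i).le
  have hp1 : ∀ i, ∑ x ∈ E (L i), p i x = 1 := fun i => by
    simp only [p]; rw [← Finset.sum_div]; exact div_self (hZ0 i).ne'
  have hprob : ∀ i, IsProbabilityMeasure (emp f (E (L i)) (p i) (L i)) := fun i =>
    isProbabilityMeasure_emp (hp i) (hp1 i) (hL0 i)
  let ν : ℕ → ProbabilityMeasure X := fun i => ⟨emp f (E (L i)) (p i) (L i), hprob i⟩
  obtain ⟨ρ, -, hρ⟩ := isCompact_univ.ultrafilter_le_nhds'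
    ((Ultrafilter.of (atTop : Filter ℕ)).map ν) Filter.univ_mem
  have hU : ((Ultrafilter.of (atTop : Filter ℕ) : Ultrafilter ℕ) : Filter ℕ) ≤ atTop :=
    Ultrafilter.of_le _
  generalize Ultrafilter.of (atTop : Filter ℕ) = U at hρ hU
  have hlim : Tendsto ν U (𝓝 ρ) := hρ
  have hint := ProbabilityMeasure.tendsto_iff_forall_integral_tendsto.1 hlim
  have hLtop : Tendsto (fun i => (L i : ℝ)) atTop atTop :=
    tendsto_natCast_atTop_atTop.comp (tendsto_add_atTop_nat _)
  have hcts : ∀ g : X → ℝ, Continuous g →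
      Tendsto (fun i => ∫ x, g x ∂(emp f (E (L i)) (p i) (L i))) U (𝓝 (∫ x, g x ∂(ρ : Measure X))) :=
    fun g hg => hint (BoundedContinuousFunction.mkOfCompact ⟨g, hg⟩)
  have hinv : MeasurePreserving f (ρ : Measure X) ρ := by
    refine ⟨hf.measurable, ?_⟩
    have := Measure.isProbabilityMeasure_map (μ := (ρ : Measure X)) hf.measurable.aemeasurable
    refine ext_of_forall_integral_eq_of_IsFiniteMeasure fun g => ?_
    rw [integral_map hf.measurable.aemeasurable g.continuous.aestronglyMeasurable]
    obtain ⟨C, -, hC⟩ := exists_bound g.continuous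
    have h1 := (hcts _ (g.continuous.comp hf)).sub (hcts _ g.continuous)
    have h2 : Tendsto (fun i => 2 * C / (L i : ℝ)) U (𝓝 0) := (hLtop.const_div_atTop _).mono_left hU
    have h3 := squeeze_zero_norm
      (f := fun i => ∫ x, g (f x) ∂(emp f (E (L i)) (p i) (L i))
        - ∫ x, g x ∂(emp f (E (L i)) (p i) (L i)))
      (fun i => abs_integral_emp_sub_le (f := f) (g := g) (hp i) (hp1 i) hC) h2
    exact sub_eq_zero.1 (tendsto_nhds_unique h1 h3)
  refine ⟨ρ, ⟨inferInstance, hinv⟩, ?_⟩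
  obtain ⟨m, P, hP, hPnull, hPdiam⟩ := exists_null_frontier_partition (ρ : Measure X) hδ
  obtain ⟨c, hc⟩ := exists_code hP
  refine ⟨m, P, hP, le_ciInf fun r => ?_⟩
  obtain ⟨q, hq⟩ : ∃ q : ℕ, q = r + 1 := ⟨_, rfl⟩
  have hq0 : (0 : ℝ) < q := by rw [hq]; positivity
  have hqr : ((r : ℝ) + 1) = q := by rw [hq]; push_cast; ring
  rw [← hq, hqr, le_div_iff₀ hq0, mul_comm]
  have hne : Nonempty X := nonempty_of_isProbabilityMeasure (ρ : Measure X)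
  have hm : 1 ≤ m := (Fin.pos (c hne.some))
  have hinj : ∀ n ≥ N, Set.InjOn (word f c n) (E n : Set X) := by
    intro n hn x hx y hy hxy
    refine hsep n hn x hx y hy fun k hk => ?_
    have h1 := congrFun hxy ⟨k, hk⟩
    exact hPdiam (c (f^[k] x)) _ ((hc _ _).2 rfl) _ ((hc _ _).2 h1.symm)
  have hA : ∀ v, Tendsto (fun i => (emp f (E (L i)) (p i) (L i) (orbitJoin f P q v)).toReal) U
      (𝓝 ((ρ : Measure X) (orbitJoin f P q v)).toReal) := fun v =>
    (ENNReal.tendsto_toReal (measure_ne_top _ _)).comp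
      (ProbabilityMeasure.tendsto_measure_of_null_frontier_of_tendsto' hlim
        (frontier_orbitJoin_null hf hinv hPnull q v))
  have hent : Tendsto (fun i => partEnt (emp f (E (L i)) (p i) (L i)) (orbitJoin f P q)) U
      (𝓝 (partEnt (ρ : Measure X) (orbitJoin f P q))) := by
    unfold partEnt
    refine tendsto_finsetSum _ fun v _ => Tendsto.neg ?_
    exact (Real.continuous_mul_log.tendsto _).comp (hA v)
  have hbound : ∀ i ≥ q, q * (a - ∫ x, φ x ∂(emp f (E (L i)) (p i) (L i)))
      - (q * (2 * q * Real.log m) - q * Real.log η) / L i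
      ≤ partEnt (emp f (E (L i)) (p i) (L i)) (orbitJoin f P q) := by
    intro i hi
    have := hprob i
    have hLpos : (0 : ℝ) < L i := Nat.cast_pos.2 (Nat.pos_of_ne_zero (hL0 i))
    have hEne : (E (L i)).Nonempty := by
      by_contra h
      have h1 := hp1 i
      rw [Finset.not_nonempty_iff_eq_empty.1 h] at h1
      simp at h1
    have hpos : ∀ x ∈ E (L i), ∀ k < L i,
        0 < (emp f (E (L i)) (p i) (L i) (orbitJoin f P q (word f c q (f^[k] x)))).toReal := by
      intro x hx k hk
      rw [emp_apply (hp i) (measurableSet_orbitJoin hP.1 hf.measurable q _)]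
      have hnn : ∀ y j, 0 ≤ p i y / L i * (orbitJoin f P q (word f c q (f^[k] x))).indicator
          (fun _ => (1 : ℝ)) (f^[j] y) := fun y j =>
        mul_nonneg (div_nonneg (hp i y) hLpos.le) (Set.indicator_nonneg (fun _ _ => zero_le_one) _)
      refine Finset.sum_pos' (fun y _ => Finset.sum_nonneg fun j _ => hnn y j) ⟨x, hx, ?_⟩
      refine Finset.sum_pos' (fun j _ => hnn x j) ⟨k, Finset.mem_range.2 hk, ?_⟩
      rw [Set.indicator_of_mem ((mem_orbitJoin_iff hc).2 rfl), mul_one]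
      exact div_pos (div_pos (Real.exp_pos _) (hZ0 i)) hLpos
    have hblock := block_entropy_bound hm f c φ (L i) q (by omega) (by simp only [L]; omega)
      (E (L i)) hEne (hinj _ (hLN i)) (p i) (Z i) rfl (fun x => rfl)
      (fun v => (emp f (E (L i)) (p i) (L i) (orbitJoin f P q v)).toReal)
      (fun v => ENNReal.toReal_nonneg) (sum_measure_orbitJoin _ hP.1 hf.measurable hc q) hpos
    have hlogZ : Real.log η + L i * a ≤ Real.log (Z i) := by
      rw [← Real.log_exp (L i * a), ← Real.log_mul hη.ne' (Real.exp_ne_zero _)]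
      exact Real.log_le_log (by positivity) (hZlow i)
    have hφi : ∑ x ∈ E (L i), p i x * birk f φ (L i) x
        = L i * ∫ x, φ x ∂(emp f (E (L i)) (p i) (L i)) := by
      rw [integral_emp (hp i), Finset.mul_sum]
      exact Finset.sum_congr rfl fun x _ => by field_simp
    have hHi : ∑ x ∈ E (L i), ∑ k ∈ Finset.range (L i), p i x * -Real.log
          (emp f (E (L i)) (p i) (L i) (orbitJoin f P q (word f c q (f^[k] x)))).toReal
        = L i * partEnt (emp f (E (L i)) (p i) (L i)) (orbitJoin f P q) := by
      rw [partEnt_emp hP.1 hf.measurable hc (hp i), Finset.mul_sum]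
      refine Finset.sum_congr rfl fun x _ => ?_
      rw [Finset.mul_sum]
      exact Finset.sum_congr rfl fun k _ => by field_simp
    rw [hφi, hHi] at hblock
    have h5 := mul_le_mul_of_nonneg_left hlogZ hq0.le
    rw [sub_le_iff_le_add, ← mul_le_mul_iff_right₀ hLpos, mul_add, mul_div_cancel₀ _ hLpos.ne']
    nlinarith
  have hlim2 : Tendsto (fun i => q * (a - ∫ x, φ x ∂(emp f (E (L i)) (p i) (L i)))
      - (q * (2 * q * Real.log m) - q * Real.log η) / L i) U
      (𝓝 (q * (a - ∫ x, φ x ∂(ρ : Measure X)) - 0)) :=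
    ((tendsto_const_nhds.sub (hcts φ hφ)).const_mul _).sub
      ((hLtop.const_div_atTop _).mono_left hU)
  rw [sub_zero] at hlim2
  exact le_of_tendsto_of_tendsto hlim2 hent (hU ((eventually_ge_atTop q).mono hbound))

/-! ### Consequences of property (P) and of a finite `u`-dimension -/

lemma birk_const_mul (f : X → X) (c : ℝ) (u : X → ℝ) (n : ℕ) (x : X) :
    birk f (fun x => c * u x) n x = c * birk f u n x := by
  simp only [birk, Finset.mul_sum]

/-- Under property (P) the Birkhoff sums of `u` have at worst sublinear negative growth: any orbit
segment is cut into pieces lying in balls of a finite cover along which `S_n u ≥ 0`. -/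
lemma birk_lower [CompactSpace X] {f : X → X} (hf : Continuous f) {u : X → ℝ} (hu : Continuous u)
    (hP : PropP f u) {ε : ℝ} (hε : 0 < ε) :
    ∃ C, 0 ≤ C ∧ ∀ (n : ℕ) (x : X), -(n * ε) - C ≤ birk f u n x := by
  classical
  obtain ⟨δ, hδ, hmod⟩ := exists_modulus hu hε
  obtain ⟨B, hB0, hB⟩ := exists_bound hu
  obtain ⟨E, hE, hlim⟩ := hP δ hδ
  obtain ⟨N₀, hN₀⟩ := hlim 0
  obtain ⟨-, hE1, hE2⟩ := hE (max N₀ 1)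
  have hE3 := hN₀ (max N₀ 1) (le_max_left _ _)
  obtain ⟨Γ, hΓE, hΓfin, hΓ⟩ := isCompact_univ.elim_finite_subcover_image
    (fun p _ => isOpen_bowenBall hf p.1 p.2 δ) hE2
  let T := hΓfin.toFinset.sup fun p => p.2
  have hT : ∀ p ∈ Γ, p.2 ≤ T := fun p hp =>
    Finset.le_sup (f := fun p : X × ℕ => p.2) (hΓfin.mem_toFinset.2 hp)
  refine ⟨T * B, by positivity, fun n => ?_⟩
  induction n using Nat.strong_induction_on with
  | _ n ih =>
    intro x
    rcases lt_or_ge n T with hn | hn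
    · have h1 : |birk f u n x| ≤ n * B := by
        unfold birk
        refine (Finset.abs_sum_le_sum_abs _ _).trans ?_
        refine (Finset.sum_le_sum fun k _ => hB _).trans (by simp)
      have h2 : (n : ℝ) * B ≤ T * B := by gcongr
      have h3 : 0 ≤ n * ε := by positivity
      linarith [neg_abs_le (birk f u n x)]
    · obtain ⟨p, hp, hx⟩ := Set.mem_iUnion₂.1 (hΓ (Set.mem_univ x))
      have hp1 : 1 ≤ p.2 := (le_max_right _ _).trans (hE1 p (hΓE hp)).2
      obtain ⟨d, hd⟩ := Nat.exists_eq_add_of_le ((hT p hp).trans hn)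
      have h1 := ih d (by omega) (f^[p.2] x)
      have h2 := abs_le.1 (birk_ball hmod hx)
      have h3 := hE3 p (hΓE hp)
      rw [hd, birk_add]
      push_cast
      linarith [h2.2]

lemma integrable_of_continuous [CompactSpace X] [MeasurableSpace X] [BorelSpace X] (μ : Measure X)
    [IsFiniteMeasure μ] {g : X → ℝ} (hg : Continuous g) : Integrable g μ :=
  (BoundedContinuousFunction.mkOfCompact ⟨g, hg⟩).integrable μ

lemma integral_nonneg_of_propP [CompactSpace X] [MeasurableSpace X] [BorelSpace X]
    {f : X → X} (hf : Continuous f) {u : X → ℝ} (hu : Continuous u) (hP : PropP f u)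
    {μ : Measure X} (hμ : μ ∈ invProb f) : 0 ≤ ∫ x, u x ∂μ := by
  obtain ⟨hprob, hinv⟩ := hμ
  by_contra hneg
  push Not at hneg
  obtain ⟨C, -, hC⟩ := birk_lower hf hu hP (ε := -(∫ x, u x ∂μ) / 2) (by linarith)
  obtain ⟨n, hn⟩ := exists_nat_gt (C / (-(∫ x, u x ∂μ) / 2))
  rw [div_lt_iff₀ (by linarith)] at hn
  obtain ⟨h1, h2⟩ := integral_birk hinv (integrable_of_continuous μ hu) n
  have h3 := integral_mono (integrable_const _) h1 (hC n)
  rw [integral_const, h2, probReal_univ, one_smul] at h3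
  linarith

/-- A strict upper bound `s'` for the `u`-dimension makes the pressure of `-s' u` nonpositive: in
passing from `s < s'` with `m_u(X,s,δ) = 0` to `s'`, the weights are multiplied by
`exp (-(s' - s) S_n u)`, which grows subexponentially by `birk_lower`. -/
lemma pressure_nonpos_of_dimu_lt [CompactSpace X] {f : X → X} (hf : Continuous f) {u : X → ℝ}
    (hu : Continuous u) (hP : PropP f u) {s' : ℝ} (hs' : dimu f u univ < (s' : EReal)) :
    pressure f univ (fun x => -s' * u x) ≤ ((0 : ℝ) : EReal) := by
  refine iSup₂_le fun δ hδ => ?_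
  have h1 : dimuAt f u univ δ < (s' : EReal) :=
    lt_of_le_of_lt (le_iSup₂ (f := fun (δ : ℝ) (_ : 0 < δ) => dimuAt f u univ δ) δ hδ) hs'
  obtain ⟨_, ⟨s, hs, rfl⟩, hlt⟩ := sInf_lt_iff.1 h1
  have hss : 0 < s' - s := sub_pos.2 (EReal.coe_lt_coe_iff.1 hlt)
  refine EReal.le_of_forall_lt_iff_le.1 fun t ht => ?_
  have ht0 : 0 < t := EReal.coe_lt_coe_iff.1 ht
  refine sInf_le (Set.mem_image_of_mem (fun s : ℝ => (s : EReal)) ?_)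
  obtain ⟨C, hC0, hC⟩ := birk_lower hf hu hP (ε := t / (s' - s)) (by positivity)
  have hmU : mU f u univ s δ = 0 := hs
  unfold mU at hmU
  rw [ENNReal.iSup_eq_zero] at hmU
  change mP f univ t (fun x => -s' * u x) δ = 0
  unfold mP
  rw [ENNReal.iSup_eq_zero]
  intro N
  let K : ℝ≥0∞ := ENNReal.ofReal (Real.exp ((s' - s) * C))
  have hK0 : K ≠ 0 := (ENNReal.ofReal_pos.2 (Real.exp_pos _)).ne'
  have hKt : K ≠ ⊤ := ENNReal.ofReal_ne_top
  have hterm : ∀ E : Set (X × ℕ),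
      coverSum E (fun p => -(p.2 : ℝ) * t + birk f (fun x => -s' * u x) p.2 p.1)
        ≤ K * coverSum E (fun p => -s * birk f u p.2 p.1) := by
    intro E
    unfold coverSum
    rw [← ENNReal.tsum_mul_left]
    refine ENNReal.tsum_le_tsum fun p => ?_
    rw [← ENNReal.ofReal_mul (Real.exp_pos _).le, ← Real.exp_add]
    beta_reduce
    rw [birk_const_mul]
    refine ENNReal.ofReal_le_ofReal (Real.exp_le_exp.2 ?_)
    have h2 := mul_le_mul_of_nonneg_left (hC p.1.2 p.1.1) hss.le
    have h3 : (s' - s) * (-(p.1.2 * (t / (s' - s))) - C) = -(p.1.2 * t) - (s' - s) * C := by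
      field_simp
    rw [h3] at h2
    linarith
  have h0 : K * (⨅ (E : Set (X × ℕ)) (_ : IsBowenCover f univ N δ E),
      coverSum E fun p => -s * birk f u p.2 p.1) = 0 := by
    rw [hmU N, mul_zero]
  rw [ENNReal.mul_iInf_of_ne hK0 hKt] at h0
  simp_rw [ENNReal.mul_iInf_of_ne hK0 hKt] at h0
  exact le_antisymm ((iInf₂_mono fun E _ => hterm E).trans h0.le) zero_le

/-! ### Entropy of partitions, mixtures of measures -/

section entropy

variable [MeasurableSpace X]

lemma partEnt_nonneg (μ : Measure X) [IsProbabilityMeasure μ] {ι : Type*} [Fintype ι]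
    (P : ι → Set X) : 0 ≤ partEnt μ P :=
  Finset.sum_nonneg fun i _ => by
    have := Real.negMulLog_nonneg (x := (μ (P i)).toReal) ENNReal.toReal_nonneg measureReal_le_one
    rwa [Real.negMulLog, neg_mul] at this

/-- `v` is at most the entropy of some finite partition. This is a form of `v ≤ h_μ(f)` that does
not require the entropies of all partitions to be bounded. -/
def EntGe (f : X → X) (μ : Measure X) (v : ℝ) : Prop :=
  ∃ (m : ℕ) (P : Fin m → Set X), IsFinPartition P ∧
    v ≤ ⨅ n : ℕ, partEnt μ (orbitJoin f P (n + 1)) / (n + 1)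

lemma entGe_zero (f : X → X) (μ : Measure X) [IsProbabilityMeasure μ] : EntGe f μ 0 :=
  ⟨1, fun _ => univ, ⟨fun _ => MeasurableSet.univ,
    fun i j hij => absurd (Subsingleton.elim i j) hij, by simp [Set.iUnion_const]⟩,
    Real.iInf_nonneg fun n => div_nonneg (partEnt_nonneg μ _) (by positivity)⟩

lemma kolSinai_nonneg (f : X → X) (μ : Measure X) [IsProbabilityMeasure μ] : 0 ≤ kolSinai f μ :=
  Real.iSup_nonneg fun _ => Real.iSup_nonneg fun _ => Real.iSup_nonneg fun _ =>
    Real.iInf_nonneg fun _ => div_nonneg (partEnt_nonneg μ _) (by positivity)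

lemma kolSinai_le {f : X → X} {μ : Measure X} [IsProbabilityMeasure μ] {B : ℝ}
    (h : ∀ v, EntGe f μ v → v ≤ B) : kolSinai f μ ≤ B := by
  have hB : 0 ≤ B := h 0 (entGe_zero f μ)
  exact Real.iSup_le (fun m => Real.iSup_le (fun P => Real.iSup_le
    (fun hP => h _ ⟨m, P, hP, le_rfl⟩) hB) hB) hB

lemma le_kolSinai {f : X → X} {μ : Measure X} [IsProbabilityMeasure μ] {B v : ℝ}
    (h : ∀ v, EntGe f μ v → v ≤ B) (hv : EntGe f μ v) : v ≤ kolSinai f μ := by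
  have hB : 0 ≤ B := h 0 (entGe_zero f μ)
  have h1 : ∀ m (P : Fin m → Set X), ⨆ (_ : IsFinPartition P),
      ⨅ n : ℕ, partEnt μ (orbitJoin f P (n + 1)) / (n + 1) ≤ B := fun m P =>
    Real.iSup_le (fun hP => h _ ⟨m, P, hP, le_rfl⟩) hB
  have h2 : ∀ m, ⨆ (P : Fin m → Set X) (_ : IsFinPartition P),
      ⨅ n : ℕ, partEnt μ (orbitJoin f P (n + 1)) / (n + 1) ≤ B := fun m => Real.iSup_le (h1 m) hB
  obtain ⟨m, P, hP, hle⟩ := hv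
  refine hle.trans ?_
  unfold kolSinai
  refine le_trans ?_ (le_ciSup (f := fun m => ⨆ (P : Fin m → Set X) (_ : IsFinPartition P),
      ⨅ n : ℕ, partEnt μ (orbitJoin f P (n + 1)) / (n + 1))
      ⟨B, Set.forall_mem_range.2 h2⟩ m)
  refine le_trans ?_ (le_ciSup (f := fun P : Fin m → Set X => ⨆ (_ : IsFinPartition P),
      ⨅ n : ℕ, partEnt μ (orbitJoin f P (n + 1)) / (n + 1))
      ⟨B, Set.forall_mem_range.2 (h1 m)⟩ P)
  rw [ciSup_pos hP]

/-- Entropy is monotone under refinement. -/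
lemma partEnt_mono (μ : Measure X) [IsProbabilityMeasure μ] {ι κ : Type*} [Fintype ι] [Fintype κ]
    [DecidableEq ι] {A : ι → Set X} {B : κ → Set X} (π : κ → ι) (hB : ∀ k, MeasurableSet (B k))
    (hd : Pairwise (Function.onFun Disjoint B))
    (hA : ∀ i, A i = ⋃ k ∈ Finset.univ.filter (fun k => π k = i), B k) :
    partEnt μ A ≤ partEnt μ B := by
  have hsum : ∀ i, (μ (A i)).toReal = ∑ k with π k = i, (μ (B k)).toReal := by
    intro i
    rw [hA, measure_biUnion_finset (fun a _ b _ hab => hd hab) (fun k _ => hB k),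
      ENNReal.toReal_sum (fun _ _ => measure_ne_top _ _)]
  unfold partEnt
  rw [← Finset.sum_fiberwise Finset.univ π]
  refine Finset.sum_le_sum fun i _ => ?_
  nth_rewrite 1 [hsum i]
  rw [Finset.sum_mul, ← Finset.sum_neg_distrib]
  refine Finset.sum_le_sum fun k hk => neg_le_neg ?_
  rcases (ENNReal.toReal_nonneg (a := μ (B k))).eq_or_lt with h | h
  · rw [← h, zero_mul, zero_mul]
  · refine mul_le_mul_of_nonneg_left (Real.log_le_log h ?_) h.le
    rw [hsum i]
    exact Finset.single_le_sum (f := fun k => (μ (B k)).toReal)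
      (fun _ _ => ENNReal.toReal_nonneg) hk

/-- The mixture `t μ + (1 - t) ν`. -/
def mix (t : ℝ) (μ ν : Measure X) : Measure X :=
  ENNReal.ofReal t • μ + ENNReal.ofReal (1 - t) • ν

lemma mix_toReal {t : ℝ} (h0 : 0 ≤ t) (h1 : t ≤ 1) (μ ν : Measure X) [IsProbabilityMeasure μ]
    [IsProbabilityMeasure ν] (s : Set X) :
    (mix t μ ν s).toReal = t * (μ s).toReal + (1 - t) * (ν s).toReal := by
  unfold mix
  rw [Measure.add_apply, Measure.smul_apply, Measure.smul_apply, smul_eq_mul, smul_eq_mul,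
    ENNReal.toReal_add (ENNReal.mul_ne_top ENNReal.ofReal_ne_top (measure_ne_top _ _))
      (ENNReal.mul_ne_top ENNReal.ofReal_ne_top (measure_ne_top _ _)),
    ENNReal.toReal_mul, ENNReal.toReal_mul, ENNReal.toReal_ofReal h0,
    ENNReal.toReal_ofReal (sub_nonneg.2 h1)]

lemma mix_mem_invProb {t : ℝ} (h0 : 0 ≤ t) (h1 : t ≤ 1) {f : X → X} {μ ν : Measure X}
    (hμ : μ ∈ invProb f) (hν : ν ∈ invProb f) : mix t μ ν ∈ invProb f := by
  obtain ⟨_, hμ⟩ := hμ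
  obtain ⟨_, hν⟩ := hν
  refine ⟨⟨?_⟩, hμ.measurable, ?_⟩
  · rw [← ENNReal.toReal_eq_one_iff, mix_toReal h0 h1]
    simp
  · unfold mix
    rw [Measure.map_add _ _ hμ.measurable, Measure.map_smul, Measure.map_smul, hμ.map_eq, hν.map_eq]

lemma integral_mix {t : ℝ} (h0 : 0 ≤ t) (h1 : t ≤ 1) {μ ν : Measure X} {g : X → ℝ}
    (hμ : Integrable g μ) (hν : Integrable g ν) :
    ∫ x, g x ∂(mix t μ ν) = t * ∫ x, g x ∂μ + (1 - t) * ∫ x, g x ∂ν := by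
  unfold mix
  rw [integral_add_measure (hμ.smul_measure ENNReal.ofReal_ne_top)
    (hν.smul_measure ENNReal.ofReal_ne_top), integral_smul_measure, integral_smul_measure,
    ENNReal.toReal_ofReal h0, ENNReal.toReal_ofReal (sub_nonneg.2 h1), smul_eq_mul, smul_eq_mul]

lemma le_partEnt_mix {t : ℝ} (h0 : 0 ≤ t) (h1 : t ≤ 1) (μ ν : Measure X) [IsProbabilityMeasure μ]
    [IsProbabilityMeasure ν] {ι : Type*} [Fintype ι] (P : ι → Set X) :
    t * partEnt μ P + (1 - t) * partEnt ν P ≤ partEnt (mix t μ ν) P := by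
  unfold partEnt
  rw [Finset.mul_sum, Finset.mul_sum, ← Finset.sum_add_distrib]
  refine Finset.sum_le_sum fun i _ => ?_
  rw [mix_toReal h0 h1]
  have := Real.concaveOn_negMulLog.2 (x := (μ (P i)).toReal) (y := (ν (P i)).toReal)
    ENNReal.toReal_nonneg ENNReal.toReal_nonneg h0 (sub_nonneg.2 h1) (by ring)
  simpa only [Real.negMulLog, smul_eq_mul, neg_mul] using this

/-- Entropy is concave in the measure; the two partitions are replaced by their join. -/
lemma EntGe.mix {f : X → X} (hf : Measurable f) {t : ℝ} (h0 : 0 ≤ t) (h1 : t ≤ 1)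
    {μ ν : Measure X} [IsProbabilityMeasure μ] [IsProbabilityMeasure ν] {v w : ℝ}
    (hv : EntGe f μ v) (hw : EntGe f ν w) : EntGe f (mix t μ ν) (t * v + (1 - t) * w) := by
  classical
  obtain ⟨m, P, hP, hPv⟩ := hv
  obtain ⟨m', Q, hQ, hQw⟩ := hw
  obtain ⟨c, hc⟩ := exists_code hP
  obtain ⟨d, hd⟩ := exists_code hQ
  let R : Fin (m * m') → Set X := fun k =>
    P (finProdFinEquiv.symm k).1 ∩ Q (finProdFinEquiv.symm k).2
  let e : X → Fin (m * m') := fun x => finProdFinEquiv (c x, d x)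
  have he : ∀ x k, x ∈ R k ↔ e x = k := by
    intro x k
    simp only [R, e, Set.mem_inter_iff, hc, hd]
    rw [← Equiv.eq_symm_apply, Prod.ext_iff]
  have hRm : ∀ k, MeasurableSet (R k) := fun k => (hP.1 _).inter (hQ.1 _)
  have hR : IsFinPartition R := by
    refine ⟨hRm, fun i j hij => Set.disjoint_left.2 fun x hx hy => hij ?_,
      Set.eq_univ_of_forall fun x => Set.mem_iUnion.2 ⟨e x, (he _ _).2 rfl⟩⟩
    rw [← (he _ _).1 hx, ← (he _ _).1 hy]
  have hmono : ∀ (ρ : Measure X) [IsProbabilityMeasure ρ] (l : ℕ) (S : Fin l → Set X) (g : X → Fin l)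
      (_ : ∀ x i, x ∈ S i ↔ g x = i) (π : Fin (m * m') → Fin l) (_ : ∀ x, g x = π (e x)) (n : ℕ),
      partEnt ρ (orbitJoin f S n) ≤ partEnt ρ (orbitJoin f R n) := by
    intro ρ _ l S g hg π hπ n
    refine partEnt_mono ρ (fun w k => π (w k)) (measurableSet_orbitJoin hRm hf n)
      (disjoint_orbitJoin he n) fun v => ?_
    ext x
    simp only [Finset.mem_filter, Finset.mem_univ, true_and, Set.mem_iUnion, mem_orbitJoin_iff hg,
      mem_orbitJoin_iff he, exists_prop, exists_eq_right']
    have : word f g n x = fun k => π (word f e n x k) := funext fun k => hπ _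
    rw [this]
  have hbdd : ∀ (ρ : Measure X) [IsProbabilityMeasure ρ] (l : ℕ) (S : Fin l → Set X),
      BddBelow (Set.range fun n : ℕ => partEnt ρ (orbitJoin f S (n + 1)) / ((n : ℝ) + 1)) :=
    fun ρ _ l S => ⟨0, Set.forall_mem_range.2 fun n =>
      div_nonneg (partEnt_nonneg ρ _) (by positivity)⟩
  refine ⟨m * m', R, hR, le_ciInf fun n => ?_⟩
  have hn : (0 : ℝ) < n + 1 := by positivity
  have hv' := hPv.trans (ciInf_le (hbdd μ m P) n)
  have hw' := hQw.trans (ciInf_le (hbdd ν m' Q) n)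
  rw [le_div_iff₀ hn] at hv' hw' ⊢
  have h2 := hmono μ m P c hc (fun k => (finProdFinEquiv.symm k).1) (fun x => by simp [e]) (n + 1)
  have h3 := hmono ν m' Q d hd (fun k => (finProdFinEquiv.symm k).2) (fun x => by simp [e]) (n + 1)
  have h4 := le_partEnt_mix h0 h1 μ ν (orbitJoin f R (n + 1))
  have h5 := mul_le_mul_of_nonneg_left (hv'.trans h2) h0
  have h6 := mul_le_mul_of_nonneg_left (hw'.trans h3) (sub_nonneg.2 h1)
  linarith

end entropy

/-! ### The conditional variational principle -/

/-- A convex set `W` of pairs `(b, g)` that meets every half plane `g + q b > 0` and has points on both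
sides of the axis `b = 0` contains a point `(0, g)` with `g > 0`. The sets of slopes `q` served by
points with `b > 0`, respectively `b < 0`, are open, so if they cover the line then they meet, and a
combination of two points serving the same `q` lies on the axis. -/
lemma exists_zero_pos {W : Set (ℝ × ℝ)} (hW : Convex ℝ W)
    (h : ∀ q : ℝ, ∃ w ∈ W, 0 < w.2 + q * w.1)
    (hneg : ∃ w ∈ W, w.1 < 0) (hpos : ∃ w ∈ W, 0 < w.1) :
    ∃ w ∈ W, w.1 = 0 ∧ 0 < w.2 := by
  by_contra hne
  push Not at hne
  let U : Set ℝ := ⋃ w ∈ {w ∈ W | 0 < w.1}, {q | 0 < w.2 + q * w.1}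
  let V : Set ℝ := ⋃ w ∈ {w ∈ W | w.1 < 0}, {q | 0 < w.2 + q * w.1}
  have hopen : ∀ w : ℝ × ℝ, IsOpen {q : ℝ | 0 < w.2 + q * w.1} := fun w =>
    isOpen_lt continuous_const (by fun_prop)
  have hcov : (Set.univ : Set ℝ) ⊆ U ∪ V := by
    intro q _
    obtain ⟨w, hw, hq⟩ := h q
    rcases lt_trichotomy w.1 0 with h0 | h0 | h0
    · exact Or.inr (Set.mem_biUnion (show w ∈ {w ∈ W | w.1 < 0} from ⟨hw, h0⟩) hq)
    · rw [h0, mul_zero, add_zero] at hq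
      exact absurd (hne w hw h0) (not_le.2 hq)
    · exact Or.inl (Set.mem_biUnion (show w ∈ {w ∈ W | 0 < w.1} from ⟨hw, h0⟩) hq)
  have hU : (Set.univ ∩ U).Nonempty := by
    obtain ⟨w, hw, h0⟩ := hpos
    refine ⟨(1 - w.2) / w.1, trivial,
      Set.mem_biUnion (show w ∈ {w ∈ W | 0 < w.1} from ⟨hw, h0⟩) ?_⟩
    show 0 < w.2 + (1 - w.2) / w.1 * w.1
    rw [div_mul_cancel₀ _ h0.ne']
    linarith
  have hV : (Set.univ ∩ V).Nonempty := by
    obtain ⟨w, hw, h0⟩ := hneg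
    refine ⟨(1 - w.2) / w.1, trivial,
      Set.mem_biUnion (show w ∈ {w ∈ W | w.1 < 0} from ⟨hw, h0⟩) ?_⟩
    show 0 < w.2 + (1 - w.2) / w.1 * w.1
    rw [div_mul_cancel₀ _ h0.ne]
    linarith
  obtain ⟨q, -, hqU, hqV⟩ := isPreconnected_univ U V (isOpen_biUnion fun w _ => hopen w)
    (isOpen_biUnion fun w _ => hopen w) hcov hU hV
  obtain ⟨w, ⟨hw, hw0⟩, hwq⟩ := Set.mem_iUnion₂.1 hqU
  obtain ⟨z, ⟨hz, hz0⟩, hzq⟩ := Set.mem_iUnion₂.1 hqV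
  have hwq' : 0 < w.2 + q * w.1 := hwq
  have hzq' : 0 < z.2 + q * z.1 := hzq
  have hd : 0 < w.1 - z.1 := by linarith
  have hmem := hW hw hz (a := -z.1 / (w.1 - z.1)) (b := w.1 / (w.1 - z.1))
    (div_nonneg (by linarith) hd.le) (div_nonneg hw0.le hd.le) (by field_simp; ring)
  refine absurd (hne _ hmem ?_) (not_le.2 ?_)
  · simp only [Prod.fst_add, Prod.smul_fst, smul_eq_mul]
    field_simp
    ring
  · simp only [Prod.snd_add, Prod.smul_snd, smul_eq_mul]
    -- the first coordinates cancel in this combination, so adding `q` times them is harmless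
    have h1 : -z.1 / (w.1 - z.1) * w.2 + w.1 / (w.1 - z.1) * z.2
        = (-z.1 * (w.2 + q * w.1) + w.1 * (z.2 + q * z.1)) / (w.1 - z.1) := by
      field_simp
      ring
    rw [h1]
    have h2 : 0 < -z.1 * (w.2 + q * w.1) := mul_pos (by linarith) hwq'
    have h3 : 0 < w.1 * (z.2 + q * z.1) := mul_pos hw0 hzq'
    positivity

section main

variable [CompactSpace X] [MeasurableSpace X] [BorelSpace X] {f : X → X} {φ u : X → ℝ}

lemma integral_potential (hφ : Continuous φ) (hu : Continuous u) (μ : Measure X)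
    [IsFiniteMeasure μ] (α q t : ℝ) :
    ∫ x, potential φ u u α q t x ∂μ = q * ∫ x, (φ x - α * u x) ∂μ - t * ∫ x, u x ∂μ := by
  unfold potential
  rw [integral_sub, integral_const_mul, integral_const_mul]
  · exact integrable_of_continuous μ (by fun_prop)
  · exact integrable_of_continuous μ (by fun_prop)

lemma integral_sub_mul (hφ : Continuous φ) (hu : Continuous u) (μ : Measure X)
    [IsFiniteMeasure μ] (α : ℝ) :
    ∫ x, (φ x - α * u x) ∂μ = ∫ x, φ x ∂μ - α * ∫ x, u x ∂μ := by
  rw [integral_sub (integrable_of_continuous μ hφ) (integrable_of_continuous μ (by fun_prop)),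
    integral_const_mul]

lemma entGe_le_of_pressure (hf : Continuous f) {g : X → ℝ} (hg : Continuous g)
    (h : pressure f univ g ≤ ((0 : ℝ) : EReal)) {μ : Measure X} (hμ : μ ∈ invProb f) {v : ℝ}
    (hv : EntGe f μ v) : v ≤ -∫ x, g x ∂μ := by
  obtain ⟨m, P, hP, hle⟩ := hv
  have := entropy_add_integral_le hf hg h hμ hP
  linarith

lemma entGe_le_of_dimu_lt (hf : Continuous f) (hu : Continuous u) (hP : PropP f u) {s' : ℝ}
    (hs' : dimu f u univ < (s' : EReal)) {μ : Measure X} (hμ : μ ∈ invProb f) {v : ℝ}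
    (hv : EntGe f μ v) : v ≤ s' * ∫ x, u x ∂μ := by
  have hc : Continuous fun x => -s' * u x := continuous_const.mul hu
  have := entGe_le_of_pressure hf hc (pressure_nonpos_of_dimu_lt hf hu hP hs') hμ hv
  rw [integral_const_mul] at this
  linarith

/-- A number below `S(α)` is detected, for every `q`, by the entropy of an invariant measure. -/
lemma exists_measure_of_lt_Sspec (hf : Continuous f) (hφ : Continuous φ) (hu : Continuous u)
    {α s : ℝ} (hs : (s : EReal) < Sspec f φ u u α) (q : ℝ) :
    ∃ μ ∈ invProb f, ∃ v, EntGe f μ v ∧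
      0 < v + q * ∫ x, (φ x - α * u x) ∂μ - s * ∫ x, u x ∂μ := by
  have h1 : (s : EReal) < TspecOn f univ φ u u α q := lt_of_lt_of_le hs (iInf_le _ q)
  have h2 : ¬ pressure f univ (potential φ u u α q s) ≤ 0 := fun h =>
    absurd (sInf_le (Set.mem_image_of_mem (fun s : ℝ => (s : EReal)) h)) (not_le.2 h1)
  obtain ⟨a, ha0, ha⟩ := EReal.lt_iff_exists_real_btwn.1 (not_le.1 h2)
  have hcont : Continuous (potential φ u u α q s) := by unfold potential; fun_prop
  obtain ⟨μ, hμ, m, P, hP, hle⟩ := exists_measure_of_lt_pressure hf hcont ha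
  have := hμ.1
  refine ⟨μ, hμ, _, ⟨m, P, hP, le_rfl⟩, ?_⟩
  rw [integral_potential hφ hu] at hle
  have : 0 < a := by exact_mod_cast ha0
  linarith

/-- At interior points of the domain, `∫ (φ - α u)` takes both signs on invariant measures, as is
seen with `σ = ± 1`. If `∫ (φ - α u)` were nonnegative on all of them, then for a slightly smaller `α`
it would dominate a multiple of `∫ u`, hence of the entropy, and the spectrum there would be `-∞`;
similarly with the signs reversed. -/
lemma exists_sign (hf : Continuous f) (hφ : Continuous φ) (hu : Continuous u) (hP : PropP f u)
    {K : ℝ} (hK : ∀ μ ∈ invProb f, ∀ v, EntGe f μ v → v ≤ K * ∫ x, u x ∂μ) {α : ℝ}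
    (hα : α ∈ interior {α : ℝ | Sspec f φ u u α ≠ ⊥}) {σ : ℝ} (hσ : |σ| = 1) :
    ∃ μ ∈ invProb f, 0 < σ * ∫ x, (φ x - α * u x) ∂μ := by
  obtain ⟨η, hη, hball⟩ := Metric.mem_nhds_iff.1 (mem_interior_iff_mem_nhds.1 hα)
  have hσ2 : σ * σ = 1 := by rw [← abs_mul_abs_self, hσ, one_mul]
  have hmem : α + σ * (η / 2) ∈ Metric.ball α η := by
    rw [Metric.mem_ball, Real.dist_eq, add_sub_cancel_left, abs_mul, hσ, one_mul,
      abs_of_pos (by positivity)]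
    linarith
  obtain ⟨M, -, hM⟩ := EReal.lt_iff_exists_real_btwn.1 (bot_lt_iff_ne_bot.2 (hball hmem))
  obtain ⟨μ, hμ, v, hv, hlt⟩ :=
    exists_measure_of_lt_Sspec hf hφ hu hM (σ * ((|K| + |M|) / (η / 2)))
  have := hμ.1
  refine ⟨μ, hμ, ?_⟩
  by_contra hle
  push Not at hle
  have hc := integral_nonneg_of_propP hf hu hP hμ
  have hvK := hK μ hμ v hv
  rw [integral_sub_mul hφ hu] at hlt hle
  set b := ∫ x, φ x ∂μ
  set c := ∫ x, u x ∂μ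
  have h1 : σ * ((|K| + |M|) / (η / 2)) * (b - (α + σ * (η / 2)) * c)
      = (|K| + |M|) / (η / 2) * (σ * (b - α * c)) - (σ * σ) * (|K| + |M|) * c := by
    field_simp
    ring
  rw [h1, hσ2] at hlt
  have h2 : (|K| + |M|) / (η / 2) * (σ * (b - α * c)) ≤ 0 :=
    mul_nonpos_of_nonneg_of_nonpos (by positivity) hle
  have h3 := mul_le_mul_of_nonneg_right (le_abs_self K) hc
  have h4 := mul_le_mul_of_nonneg_right (neg_abs_le M) hc
  linarith

/-- The pairs `(∫ (φ - α u), v - s ∫ u)` with `v` at most the entropy form a convex set. -/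
lemma convex_pairs (hf : Continuous f) (hφ : Continuous φ) (hu : Continuous u) (α s : ℝ) :
    Convex ℝ {w : ℝ × ℝ | ∃ μ ∈ invProb f, ∃ v, EntGe f μ v ∧
      w = (∫ x, (φ x - α * u x) ∂μ, v - s * ∫ x, u x ∂μ)} := by
  rintro _ ⟨μ, hμ, v, hv, rfl⟩ _ ⟨ν, hν, w, hw, rfl⟩ a b ha hb hab
  obtain rfl : b = 1 - a := by linarith
  have ha1 : a ≤ 1 := by linarith
  have := hμ.1
  have := hν.1
  refine ⟨mix a μ ν, mix_mem_invProb ha ha1 hμ hν, _, hv.mix hf.measurable ha ha1 hw, ?_⟩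
  have hc : Continuous fun x => φ x - α * u x := by fun_prop
  rw [integral_mix ha ha1 (integrable_of_continuous μ hc) (integrable_of_continuous ν hc),
    integral_mix ha ha1 (integrable_of_continuous μ hu) (integrable_of_continuous ν hu)]
  ext
  · simp
  · simp only [Prod.snd_add, Prod.smul_snd, smul_eq_mul]
    ring

end main
/-- Proposition: entropy/`u`-integral bound and the conditional
variational principle on `int I` when `ψ = u`.
If every ergodic measure with positive entropy has `∫u dμ > 0` and `dim_u X < ∞`, then
`∫u dμ ≥ h_μ(f)/dim_u X` for all `μ ∈ M_f(X)`, and consequently the conditional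
variational principle holds for all `α ∈ int I`. -/
theorem cvp_on_interior {X : Type*} [MetricSpace X] [CompactSpace X]
    [MeasurableSpace X] [BorelSpace X]
    (f : X → X) (hf : Continuous f) (hfin : FiniteHtop f)
    (φ u : X → ℝ) (hφ : Continuous φ) (hu : Continuous u) (hP : PropP f u)
    (hpos : ∀ μ ∈ ergProb f, 0 < kolSinai f μ → 0 < ∫ x, u x ∂μ)
    (hdim : dimu f u univ < ⊤) :
    (∀ μ ∈ invProb f, kolSinai f μ / (dimu f u univ).toReal ≤ ∫ x, u x ∂μ) ∧
    ∀ α ∈ interior {α : ℝ | Sspec f φ u u α ≠ ⊥},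
      Sspec f φ u u α
        = sSup {d : EReal | ∃ μ : Measure X, μ ∈ invProb f ∧
            (∫ x, (φ x - α * u x) ∂μ) = 0 ∧ 0 < ∫ x, u x ∂μ ∧
            d = ((kolSinai f μ / ∫ x, u x ∂μ : ℝ) : EReal)} := by
  obtain ⟨K, hdK, -⟩ := EReal.lt_iff_exists_real_btwn.1 hdim
  have hK : ∀ μ ∈ invProb f, ∀ v, EntGe f μ v → v ≤ K * ∫ x, u x ∂μ := fun μ hμ v hv =>
    entGe_le_of_dimu_lt hf hu hP hdK hμ hv
  refine ⟨fun μ hμ => ?_, fun α hα => le_antisymm ?_ ?_⟩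
  · have := hμ.1
    have hc := integral_nonneg_of_propP hf hu hP hμ
    have hh := kolSinai_nonneg f μ
    rcases le_or_gt (dimu f u univ).toReal 0 with hD | hD
    · exact (div_nonpos_of_nonneg_of_nonpos hh hD).trans hc
    · rw [div_le_iff₀ hD]
      refine le_of_forall_pos_le_add fun ε hε => ?_
      have hbot : dimu f u univ ≠ ⊥ := fun h => by rw [h] at hD; simp at hD
      have hlt : dimu f u univ
          < (((dimu f u univ).toReal + ε / (∫ x, u x ∂μ + 1) : ℝ) : EReal) := by
        nth_rewrite 1 [← EReal.coe_toReal hdim.ne hbot]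
        exact EReal.coe_lt_coe_iff.2 (lt_add_of_pos_right _ (by positivity))
      have h1 : kolSinai f μ ≤ _ :=
        kolSinai_le fun v hv => entGe_le_of_dimu_lt hf hu hP hlt hμ hv
      have h2 : ε / (∫ x, u x ∂μ + 1) * ∫ x, u x ∂μ ≤ ε := by
        rw [div_mul_eq_mul_div, div_le_iff₀ (by positivity)]
        nlinarith
      linarith
  · refine EReal.ge_of_forall_gt_iff_ge.1 fun s hs => ?_
    -- it suffices to produce, for a real number `s < S(α)`, a measure with `s < h / ∫ u`
    obtain ⟨ν₁, hν₁, hneg⟩ := exists_sign hf hφ hu hP hK hα (σ := -1) (by simp)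
    obtain ⟨ν₂, hν₂, hpos⟩ := exists_sign hf hφ hu hP hK hα (σ := 1) (by simp)
    have := hν₁.1
    have := hν₂.1
    obtain ⟨_, ⟨μ, hμ, v, hv, rfl⟩, hb, hg⟩ := exists_zero_pos (convex_pairs hf hφ hu α s)
      (fun q => by
        obtain ⟨μ, hμ, v, hv, h⟩ := exists_measure_of_lt_Sspec hf hφ hu hs q
        refine ⟨_, ⟨μ, hμ, v, hv, rfl⟩, ?_⟩
        dsimp only
        linarith)
      ⟨_, ⟨ν₁, hν₁, 0, entGe_zero f ν₁, rfl⟩, by dsimp only; linarith⟩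
      ⟨_, ⟨ν₂, hν₂, 0, entGe_zero f ν₂, rfl⟩, by dsimp only; linarith⟩
    dsimp only at hb hg
    have := hμ.1
    have hvK := hK μ hμ v hv
    have hc : 0 < ∫ x, u x ∂μ := by
      refine lt_of_le_of_ne (integral_nonneg_of_propP hf hu hP hμ) fun h => ?_
      rw [← h] at hvK hg
      linarith
    have hvh := le_kolSinai (hK μ hμ) hv
    refine le_trans (EReal.coe_le_coe_iff.2 ?_) (le_sSup ⟨μ, hμ, hb, hc, rfl⟩)
    rw [le_div_iff₀ hc]
    linarith
  · refine sSup_le ?_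
    rintro _ ⟨μ, hμ, hb, hc, rfl⟩
    have := hμ.1
    refine le_iInf fun q => le_sInf ?_
    rintro _ ⟨t, ht, rfl⟩
    refine EReal.coe_le_coe_iff.2 ((div_le_iff₀ hc).2 (kolSinai_le fun v hv => ?_))
    have hcont : Continuous (potential φ u u α q t) := by unfold potential; fun_prop
    have := entGe_le_of_pressure hf hcont ht hμ hv
    rw [integral_potential hφ hu, hb] at this
    linarith

end Multifractal
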